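/- Let λ be an n-partition and π an n-permutation, and let s_{i_t}⋯s_{i_1} be any reduced word for π. Then the Demazure polynomial d_λ(π;x) = ρ_{i_t}⋯ρ_{i_1}·(x_1^{λ_1}⋯x_n^{λ_n}) equals the sum of the weight monomials x^T over all semistandard tableaux T of shape λ such that T(l,k) ∈ A_λ(T,π;l,k) for every box (l,k) of λ. -/

import Mathlib

/-
Common combinatorial set-up for "Tableaux for Key Polynomials, Demazure
Characters, and Atoms" (Proctor–Willis).

Conventions: a box `(j, i)` means column `j`, row `i`, both 1-indexed.
Partial (remnant) tableaux are encoded by their column-length functions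
`c : ℕ → ℕ` (each column of a remnant is a top segment of the original
column), together with the ambient value function `T : ℕ → ℕ → ℕ`.
-/

open scoped BigOperators Classical

noncomputable section

namespace KeyPoly

open MvPolynomial

/-- An `n`-partition `λ = (λ_1, …, λ_n)` with `λ_1 ≥ … ≥ λ_n ≥ 0`,
recorded as a function on `1, …, n`, vanishing beyond `n`. -/
structure NPartition (n : ℕ) where
  part : ℕ → ℕ
  antitone : ∀ ⦃i j : ℕ⦄, 1 ≤ i → i ≤ j → part j ≤ part i
  outside : ∀ i : ℕ, n < i → part i = 0

variable {n : ℕ}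

/-- The column length `ζ_j` of the Young diagram of `λ`. -/
def zeta (lam : NPartition n) (j : ℕ) : ℕ :=
  ((Finset.Icc 1 n).filter fun i => j ≤ lam.part i).card

/-- The box `(j,i)` (column `j`, row `i`) belongs to the diagram of `λ`. -/
def InShape (lam : NPartition n) (j i : ℕ) : Prop :=
  1 ≤ j ∧ 1 ≤ i ∧ i ≤ n ∧ j ≤ lam.part i

/-- The boxes of the diagram of `λ`, as a finite set of pairs (column, row). -/
def boxes (lam : NPartition n) : Finset (ℕ × ℕ) :=
  (Finset.Icc 1 (lam.part 1) ×ˢ Finset.Icc 1 n).filter fun b => b.1 ≤ lam.part b.2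

/-- `T` is a semistandard tableau of shape `λ` with values in `[1,n]`:
rows weakly increase eastward, columns strictly increase southward. -/
def IsSSYT (lam : NPartition n) (T : ℕ → ℕ → ℕ) : Prop :=
  (∀ j i, InShape lam j i → 1 ≤ T j i ∧ T j i ≤ n) ∧
  (∀ j i, InShape lam (j + 1) i → T j i ≤ T (j + 1) i) ∧
  (∀ j i, InShape lam j (i + 1) → T j i < T j (i + 1))

/-- Normalization: the filling vanishes outside the shape. -/
def ZeroOutside (lam : NPartition n) (T : ℕ → ℕ → ℕ) : Prop :=
  ∀ j i, ¬ InShape lam j i → T j i = 0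

/-- `T(l, k+1)`, with the boundary convention `n+1` when `k = ζ_l`. -/
def south (lam : NPartition n) (T : ℕ → ℕ → ℕ) (l k : ℕ) : ℕ :=
  if InShape lam l (k + 1) then T l (k + 1) else n + 1

/-- `T(l+1, k)`, with the boundary convention `n` when `l = λ_k`. -/
def east (lam : NPartition n) (T : ℕ → ℕ → ℕ) (l k : ℕ) : ℕ :=
  if InShape lam (l + 1) k then T (l + 1) k else n

/-- An `n`-permutation: a tuple `(p 1, …, p n)` of distinct entries from `[1,n]`. -/
def IsNPerm (n : ℕ) (p : ℕ → ℕ) : Prop :=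
  Set.BijOn p (Set.Icc 1 n) (Set.Icc 1 n)

/-- The `λ`-key `Y_λ(π)`: column `j` is `π_1, …, π_{ζ_j}` sorted increasingly
(from top to bottom); zero outside the shape. -/
def keyTab (lam : NPartition n) (p : ℕ → ℕ) (j i : ℕ) : ℕ :=
  if InShape lam j i then
    (((Finset.Icc 1 (zeta lam j)).image p).sort (· ≤ ·)).getD (i - 1) 0
  else 0

/-- A semistandard `T` is a key if the values of each column contain the
values of every column to its east. -/
def colSet (lam : NPartition n) (T : ℕ → ℕ → ℕ) (j : ℕ) : Finset ℕ :=
  (Finset.Icc 1 (zeta lam j)).image (T j)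

def IsKey (lam : NPartition n) (T : ℕ → ℕ → ℕ) : Prop :=
  ∀ j j' : ℕ, 1 ≤ j → j ≤ j' → j' ≤ lam.part 1 → colSet lam T j' ⊆ colSet lam T j

/-! ### The (right) scanning method -/

/-- The next column of the scanning path: the earliest column `h' > h`
(up to `maxCol`) whose column bottom in the remnant `c` is nonempty and has
value weakly larger than the bottom value of column `h`. -/
def nextCol (T : ℕ → ℕ → ℕ) (c : ℕ → ℕ) (maxCol h : ℕ) : Option ℕ :=
  (List.range' (h + 1) (maxCol - h)).find?
    (fun h' => decide (0 < c h' ∧ T h (c h) ≤ T h' (c h')))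

/-- Columns of the scanning path (EWIS of column bottoms) starting at column `h`,
with explicit fuel. -/
def pathColsAux (T : ℕ → ℕ → ℕ) (c : ℕ → ℕ) (maxCol : ℕ) : ℕ → ℕ → List ℕ
  | 0, h => [h]
  | fuel + 1, h =>
    match nextCol T c maxCol h with
    | none => [h]
    | some h' => h :: pathColsAux T c maxCol fuel h'

/-- Columns of the scanning path starting at the bottom of column `j` of the
remnant with column lengths `c`. -/
def pathCols (T : ℕ → ℕ → ℕ) (c : ℕ → ℕ) (maxCol j : ℕ) : List ℕ :=
  pathColsAux T c maxCol maxCol j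

/-- Remove the scanning path starting in column `j` from the remnant `c`. -/
def removePath (T : ℕ → ℕ → ℕ) (c : ℕ → ℕ) (maxCol j : ℕ) : ℕ → ℕ :=
  fun h => if h ∈ pathCols T c maxCol j then c h - 1 else c h

/-- Iterate path removal `r` times, always starting from column `j`. -/
def remnantIter (T : ℕ → ℕ → ℕ) (c0 : ℕ → ℕ) (maxCol j : ℕ) : ℕ → ℕ → ℕ
  | 0 => c0
  | r + 1 => removePath T (remnantIter T c0 maxCol j r) maxCol j

/-- Column lengths of the remnant tableau `T^{(j;i)}`. -/
def remnant (lam : NPartition n) (T : ℕ → ℕ → ℕ) (j i : ℕ) : ℕ → ℕ :=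
  remnantIter T (zeta lam) (lam.part 1) j (zeta lam j - i)

/-- The scanning path `P(T; j, i)`, recorded by its list of columns. -/
def scanPath (lam : NPartition n) (T : ℕ → ℕ → ℕ) (j i : ℕ) : List ℕ :=
  pathCols T (remnant lam T j i) (lam.part 1) j

/-- The scanning value `S(T; j, i)`: the last value of the EWIS from `(j,i)`. -/
def scanValue (lam : NPartition n) (T : ℕ → ℕ → ℕ) (j i : ℕ) : ℕ :=
  T ((scanPath lam T j i).getLastD j)
    (remnant lam T j i ((scanPath lam T j i).getLastD j))

/-- The box `(l,k)` lies on the scanning path `P(T; j, i)`. -/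
def InScanPath (lam : NPartition n) (T : ℕ → ℕ → ℕ) (j i l k : ℕ) : Prop :=
  l ∈ scanPath lam T j i ∧ k = remnant lam T j i l

/-- `m(U)` where `U` is the remnant with column lengths `c` restricted to the
columns `l+1, …, maxCol`:  the maximum of the column-bottom values, with the
convention `m((())) = 1` for the empty tableau. -/
def mEast (T : ℕ → ℕ → ℕ) (c : ℕ → ℕ) (maxCol l : ℕ) : ℕ :=
  max 1 (((Finset.Icc (l + 1) maxCol).filter fun h => 0 < c h).sup fun h => T h (c h))

/-! ### The condition sets A, C, and B -/

/-- The set `A_λ(T, π; l, k)`. -/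
def Aset (lam : NPartition n) (T : ℕ → ℕ → ℕ) (p : ℕ → ℕ) (l k : ℕ) : Set ℕ :=
  if keyTab lam p l k < mEast T (remnant lam T l k) (lam.part 1) l then (∅ : Set ℕ)
  else Set.Icc k (min (keyTab lam p l k) (min (south lam T l k - 1) (east lam T l k)))

/-- The set `C_λ(T, π; l, k)`. -/
def Cset (lam : NPartition n) (T : ℕ → ℕ → ℕ) (p : ℕ → ℕ) (l k : ℕ) : Set ℕ :=
  if l = lam.part 1 then {keyTab lam p l k}
  else if keyTab lam p l k < mEast T (remnant lam T l k) (lam.part 1) l then (∅ : Set ℕ)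
  else if mEast T (remnant lam T l k) (lam.part 1) l = keyTab lam p l k then
    Set.Icc k (min (keyTab lam p l k) (min (south lam T l k - 1) (east lam T l k)))
  else {keyTab lam p l k} ∩ Set.Icc k (min (south lam T l k - 1) (east lam T l k))

/-- The row index `a(l,k;j)`:  the `i` with `(l-1,k) ∈ P(T;j,i)`
(convention `a(l,k;l) = k`). -/
def aIdx (lam : NPartition n) (T : ℕ → ℕ → ℕ) (l k j : ℕ) : ℕ :=
  if j = l then k
  else ((Finset.Icc 1 (zeta lam j)).filter fun i => InScanPath lam T j i (l - 1) k).sup id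

/-- The row index `b(l,k;j)`:  the `i` with `(l,k+1) ∈ P(T;j,i)` when `k < ζ_l`,
and `ζ_j + 1` when `k = ζ_l` (convention `b(l,k;l) = k+1`). -/
def bIdx (lam : NPartition n) (T : ℕ → ℕ → ℕ) (l k j : ℕ) : ℕ :=
  if j = l then k + 1
  else if k = zeta lam l then zeta lam j + 1
  else ((Finset.Icc 1 (zeta lam j)).filter fun i => InScanPath lam T j i l (k + 1)).sup id

/-- `E(l,k;j,i)`:  the value of `T` at the box `(h,m)` of `P(T;j,i)` with `h < l`
maximal (convention `E(l,k;l,k) = k`). -/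
def Epath (lam : NPartition n) (T : ℕ → ℕ → ℕ) (l k j i : ℕ) : ℕ :=
  if j = l then k
  else
    T (((scanPath lam T j i).filter fun h => decide (h < l)).foldr max 0)
      (remnant lam T j i (((scanPath lam T j i).filter fun h => decide (h < l)).foldr max 0))

/-- The set `B_λ(T, π; l, k) = ⋂_{j=1}^{l} ⋃_{i=a(j)}^{b(j)-1} [E(l,k;j,i), Y_λ(π)(j,i)]`. -/
def Bset (lam : NPartition n) (T : ℕ → ℕ → ℕ) (p : ℕ → ℕ) (l k : ℕ) : Set ℕ :=
  {v | ∀ j, 1 ≤ j → j ≤ l →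
    ∃ i, aIdx lam T l k j ≤ i ∧ i + 1 ≤ bIdx lam T l k j ∧
      Epath lam T l k j i ≤ v ∧ v ≤ keyTab lam p j i}

/-! ### The left scanning method -/

/-- The largest row `r ≤ c j` of column `j` whose value is at most `x`. -/
def maxRow (T : ℕ → ℕ → ℕ) (c : ℕ → ℕ) (j x : ℕ) : ℕ :=
  ((Finset.Icc 1 (c j)).filter fun r => T j r ≤ x).sup id

/-- The rows of the maximizing weakly decreasing sequence through columns
`j, j-1, …, 1` with initial bound `x`, in a remnant with column lengths `c`. -/
def leftRows (T : ℕ → ℕ → ℕ) (c : ℕ → ℕ) : ℕ → ℕ → List ℕ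
  | 0, _ => []
  | j + 1, x => maxRow T c (j + 1) x :: leftRows T c j (T (j + 1) (maxRow T c (j + 1) x))

/-- The column-1 value at the end of the left scanning path originating at `(j, r)`. -/
def leftEndVal (T : ℕ → ℕ → ℕ) (c : ℕ → ℕ) (j r : ℕ) : ℕ :=
  T 1 ((leftRows T c j (T j r)).getLastD 0)

/-- Remove the left scanning path originating at `(l, c l)`, together with
all values beneath it, from the remnant `c`. -/
def leftRemovePath (T : ℕ → ℕ → ℕ) (c : ℕ → ℕ) (l : ℕ) : ℕ → ℕ :=
  fun j =>
    if 1 ≤ j ∧ j ≤ l then (leftRows T c l (T l (c l))).getD (l - j) 0 - 1 else c j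

/-- Iterate left-path removal `r` times (always for column `l`). -/
def leftRemnantIter (T : ℕ → ℕ → ℕ) (c0 : ℕ → ℕ) (l : ℕ) : ℕ → ℕ → ℕ
  | 0 => c0
  | r + 1 => leftRemovePath T (leftRemnantIter T c0 l r) l

/-- Column lengths of the left remnant used to compute `M(T; l, i)`:
`T` restricted to its first `l` columns with the left scanning paths
originating at `(l, ζ_l), …, (l, i+1)` (and everything beneath them) removed. -/
def leftRemnant (lam : NPartition n) (T : ℕ → ℕ → ℕ) (l i : ℕ) : ℕ → ℕ :=
  leftRemnantIter T (zeta lam) l (zeta lam l - i)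

/-- The left scanning value `M(T; l, i)`. -/
def leftScanValue (lam : NPartition n) (T : ℕ → ℕ → ℕ) (l i : ℕ) : ℕ :=
  leftEndVal T (leftRemnant lam T l i) l i

/-! ### The condition sets F and G -/

/-- The set `F_λ(T, σ; l, k)`. -/
def Fset (lam : NPartition n) (T : ℕ → ℕ → ℕ) (sg : ℕ → ℕ) (l k : ℕ) : Set ℕ :=
  if l = 1 then Set.Icc (keyTab lam sg 1 k) (south lam T 1 k - 1)
  else
    let U := leftRemnant lam T l k
    let q := maxRow T U (l - 1) (south lam T l k - 1)
    let P := (Finset.Icc 1 q).filter fun h => keyTab lam sg l k ≤ leftEndVal T U (l - 1) h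
    if hP : P.Nonempty then Set.Icc (T (l - 1) (P.min' hP)) (south lam T l k - 1)
    else (∅ : Set ℕ)

/-- The set `G_λ(T, σ; l, k)`. -/
def Gset (lam : NPartition n) (T : ℕ → ℕ → ℕ) (sg : ℕ → ℕ) (l k : ℕ) : Set ℕ :=
  if l = 1 then {keyTab lam sg 1 k}
  else
    let U := leftRemnant lam T l k
    let q := maxRow T U (l - 1) (south lam T l k - 1)
    let P := (Finset.Icc 1 q).filter fun h => leftEndVal T U (l - 1) h = keyTab lam sg l k
    if hP : P.Nonempty then
      Set.Icc (T (l - 1) (P.min' hP))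
        (min ((if P.max' hP + 1 ≤ U (l - 1) then T (l - 1) (P.max' hP + 1) else n + 1) - 1)
          (south lam T l k - 1))
    else (∅ : Set ℕ)

/-! ### Polynomials, divided differences, words -/

/-- Polynomials in the variables `X 1, …, X n` (indexed by `ℕ`) over `ℚ`. -/
abbrev Poly : Type := MvPolynomial ℕ ℚ

/-- The action of `s_i` on polynomials: interchange `x_i` and `x_{i+1}`. -/
def sOp (i : ℕ) (P : Poly) : Poly := rename (Equiv.swap i (i + 1)) P

/-- The divided difference operator
`ρ_i = (x_i - x_{i+1})⁻¹ ∘ (1 - s_i) ∘ x_i`, defined as the unique polynomial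
`Q` with `(x_i - x_{i+1}) Q = x_i P - s_i (x_i P)`. -/
def rhoOp (i : ℕ) (P : Poly) : Poly :=
  if h : ∃ Q : Poly, (X i - X (i + 1)) * Q = X i * P - sOp i (X i * P) then h.choose
  else 0

/-- The operator `ρ̄_i := ρ_i - 1`. -/
def rhoBarOp (i : ℕ) (P : Poly) : Poly := rhoOp i P - P

/-- Apply operators indexed by a word `[i_t, …, i_1]`, rightmost first:
`applyOps f [i_t, …, i_1] P = f i_t (⋯ (f i_1 P))`. -/
def applyOps (f : ℕ → Poly → Poly) : List ℕ → Poly → Poly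
  | [], P => P
  | i :: w, P => f i (applyOps f w P)

/-- The monomial `x_1^{λ_1} ⋯ x_n^{λ_n}`. -/
def lamMonomial (lam : NPartition n) : Poly :=
  ∏ i ∈ Finset.Icc 1 n, X i ^ lam.part i

/-- The weight monomial `x^T = ∏ x_i^{c_i}` of the filling `T`. -/
def weight (lam : NPartition n) (T : ℕ → ℕ → ℕ) : Poly :=
  ∏ b ∈ boxes lam, X (T b.1 b.2)

/-- The simple reflection `s_i` acting by value. -/
def swapVal (i v : ℕ) : ℕ := if v = i then i + 1 else if v = i + 1 then i else v

/-- The permutation `s_{i_t} ⋯ s_{i_1}.(1, 2, …, n)` obtained by applying the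
word `w = [i_t, …, i_1]` (rightmost letter first, each acting by value) to the
identity. -/
def permOfWord (w : List ℕ) : ℕ → ℕ := w.foldr (fun i f => swapVal i ∘ f) id

/-- `w` is a word in letters `s_1, …, s_{n-1}` producing `π` from `(1, …, n)`. -/
def WordFor (n : ℕ) (w : List ℕ) (p : ℕ → ℕ) : Prop :=
  (∀ i ∈ w, 1 ≤ i ∧ i + 1 ≤ n) ∧ ∀ t, 1 ≤ t → t ≤ n → permOfWord w t = p t

/-- `w` is a reduced word for `π`: it produces `π` with minimal length. -/
def IsReducedWord (n : ℕ) (w : List ℕ) (p : ℕ → ℕ) : Prop :=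
  WordFor n w p ∧ ∀ w' : List ℕ, WordFor n w' p → w.length ≤ w'.length

/-- The atom `c_λ(π;x) = ρ̄_{i_t} ⋯ ρ̄_{i_1} . x_1^{λ_1} ⋯ x_n^{λ_n}`, computed
from a choice of reduced word for `π` (it is independent of this choice). -/
def atomPoly (lam : NPartition n) (p : ℕ → ℕ) : Poly :=
  if h : ∃ w : List ℕ, IsReducedWord n w p then
    applyOps rhoBarOp h.choose (lamMonomial lam)
  else 0

/-! ### `S_n^λ` -/

/-- The set `Q_λ` of distinct column lengths of `λ`. -/
def Qset (lam : NPartition n) : Finset ℕ := (Finset.Icc 1 (lam.part 1)).image (zeta lam)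

/-- `π ∈ S_n^λ`: an `n`-permutation increasing on each block `[q_{r-1}+1, q_r]`
cut out by the column lengths of `λ` (equivalently, `π_i < π_j` whenever
`i < j` and no element of `Q_λ` lies in `[i, j)`). -/
def InSnLam (lam : NPartition n) (p : ℕ → ℕ) : Prop :=
  IsNPerm n p ∧ ∀ i j, 1 ≤ i → i < j → j ≤ n →
    (∀ q ∈ Qset lam, q < i ∨ j ≤ q) → p i < p j

end KeyPoly

namespace KeyPoly

/-- contribution of column `h` to the `i`-signature -/
def sgn (C : ℕ → Finset ℕ) (i h : ℕ) : ℤ :=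
  (if i ∈ C h then 1 else 0) - (if i + 1 ∈ C h then 1 else 0)

/-- partial sums of the `i`-signature -/
def GG (C : ℕ → Finset ℕ) (i b : ℕ) : ℤ := ∑ h ∈ Finset.range b, sgn C i h

/-- the crystal operator `f_i` acts on `C` in column `j` with result the last argument -/
def FStep (i : ℕ) (C : ℕ → Finset ℕ) (j : ℕ) (C' : ℕ → Finset ℕ) : Prop :=
  i ∈ C j ∧ i + 1 ∉ C j ∧ (∀ b ≤ j, GG C i b ≤ GG C i j) ∧
  (∀ b, j < b → GG C i b ≤ GG C i (j + 1)) ∧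
  C' = Function.update C j (insert (i + 1) ((C j).erase i))

/-- decreasing set of letters `≥ v` in the columns `≥ l` -/
def Dec (C : ℕ → Finset ℕ) (l v : ℕ) (S : Finset (ℕ × ℕ)) : Prop :=
  (∀ b ∈ S, l ≤ b.1 ∧ b.2 ∈ C b.1 ∧ v ≤ b.2) ∧
  (∀ a ∈ S, ∀ b ∈ S, a.1 < b.1 → b.2 < a.2)

lemma GG_succ (C : ℕ → Finset ℕ) (i b : ℕ) : GG C i (b + 1) = GG C i b + sgn C i b := by
  simp [GG, Finset.sum_range_succ]

lemma sgn_le (C : ℕ → Finset ℕ) (i b : ℕ) : sgn C i b ≤ 1 := by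
  unfold sgn; split_ifs <;> norm_num

lemma GG_mono_of {C : ℕ → Finset ℕ} {i a b : ℕ} (hab : a ≤ b)
    (h : ∀ c, a ≤ c → c < b → i ∉ C c) : GG C i b ≤ GG C i a := by
  induction b, hab using Nat.le_induction with
  | base => exact le_rfl
  | succ b hb ih =>
    rw [GG_succ]
    have h1 := ih (fun c hc hc' => h c hc (by omega))
    have h2 : sgn C i b ≤ 0 := by
      unfold sgn; rw [if_neg (h b hb (by omega))]; split_ifs <;> norm_num
    omega

lemma GG_mono_of' {C : ℕ → Finset ℕ} {i a b : ℕ} (hab : a ≤ b)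
    (h : ∀ c, a ≤ c → c < b → i + 1 ∉ C c) : GG C i a ≤ GG C i b := by
  induction b, hab using Nat.le_induction with
  | base => exact le_rfl
  | succ b hb ih =>
    rw [GG_succ]
    have h1 := ih (fun c hc hc' => h c hc (by omega))
    have h2 : 0 ≤ sgn C i b := by
      unfold sgn; rw [if_neg (h b hb (by omega))]; split_ifs <;> norm_num
    omega

/-- an `i+1` in a column whose partial sum is small has an `i` to its right -/
lemma exists_i_right {C : ℕ → Finset ℕ} {i a j : ℕ} (haj : a < j) (ha : i + 1 ∈ C a)
    (hG : GG C i a ≤ GG C i j) : ∃ b, a ≤ b ∧ b < j ∧ i ∈ C b := by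
  by_contra hcon
  push Not at hcon
  have h1 := GG_mono_of (C := C) (i := i) (a := a + 1) (b := j) haj
    (fun c hc hc' => hcon c (by omega) hc')
  rw [GG_succ] at h1
  have : sgn C i a = -1 := by
    unfold sgn; rw [if_neg (hcon a le_rfl haj), if_pos ha]; norm_num
  omega

lemma exists_i1_left {C : ℕ → Finset ℕ} {i b j : ℕ} (hjb : j < b) (hb : i ∈ C b)
    (hG : GG C i (b + 1) ≤ GG C i (j + 1)) : ∃ a, j < a ∧ a ≤ b ∧ i + 1 ∈ C a := by
  by_contra hcon
  push Not at hcon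
  have h1 := GG_mono_of' (C := C) (i := i) (a := j + 1) (b := b) hjb
    (fun c hc hc' => hcon c (by omega) (by omega))
  rw [GG_succ] at hG
  have : sgn C i b = 1 := by
    unfold sgn; rw [if_neg (hcon b hjb le_rfl), if_pos hb]; norm_num
  omega

lemma FStep.mem_iff {i j : ℕ} {C C' : ℕ → Finset ℕ} (h : FStep i C j C') (g x : ℕ) :
    x ∈ C' g ↔ (g ≠ j ∧ x ∈ C g) ∨ (g = j ∧ (x = i + 1 ∨ (x ≠ i ∧ x ∈ C g))) := by
  obtain ⟨-, -, -, -, rfl⟩ := h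
  by_cases hg : g = j
  · subst hg; simp
  · simp [hg]

/-- replacing an element of a decreasing set -/
lemma Dec.replace {C C' : ℕ → Finset ℕ} {l v : ℕ} {S : Finset (ℕ × ℕ)} (hS : Dec C l v S)
    {a b : ℕ × ℕ} (ha : a ∈ S) (hb : b ∉ S)
    (hb1 : l ≤ b.1 ∧ b.2 ∈ C' b.1 ∧ v ≤ b.2)
    (hC : ∀ x ∈ S, x ≠ a → x.2 ∈ C' x.1)
    (hlt : ∀ x ∈ S, x ≠ a → x.1 < b.1 → b.2 < x.2)
    (hgt : ∀ x ∈ S, x ≠ a → b.1 < x.1 → x.2 < b.2) :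
    ∃ S', Dec C' l v S' ∧ S'.card = S.card := by
  refine ⟨insert b (S.erase a), ⟨?_, ?_⟩, ?_⟩
  · intro x hx
    rw [Finset.mem_insert, Finset.mem_erase] at hx
    rcases hx with rfl | ⟨hxa, hx⟩
    · exact hb1
    · exact ⟨(hS.1 x hx).1, hC x hx hxa, (hS.1 x hx).2.2⟩
  · intro x hx y hy hxy
    rw [Finset.mem_insert, Finset.mem_erase] at hx hy
    rcases hx with rfl | ⟨hxa, hx⟩ <;> rcases hy with rfl | ⟨hya, hy⟩
    · omega
    · exact hgt y hy hya hxy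
    · exact hlt x hx hxa hxy
    · exact hS.2 x hx y hy hxy
  · rw [Finset.card_insert_of_notMem, Finset.card_erase_of_mem ha]
    · have := Finset.card_pos.2 ⟨a, ha⟩; omega
    · intro h; exact hb (Finset.mem_of_mem_erase h)

lemma FStep.dec_forward {i j : ℕ} {C C' : ℕ → Finset ℕ} (h : FStep i C j C') {l v : ℕ}
    (hv : v ≠ i + 1) {S : Finset (ℕ × ℕ)} (hS : Dec C l v S) :
    ∃ S', Dec C' l v S' ∧ S'.card = S.card := by
  have hmem := h.mem_iff
  obtain ⟨hi, hi1, hl, hr, -⟩ := h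
  by_cases hj : (j, i) ∈ S
  · have hj1 := hS.1 _ hj
    simp only at hj1
    have hCC : ∀ x ∈ S, x ≠ (j, i) → x.2 ∈ C' x.1 := by
      rintro ⟨g, x⟩ hx hne
      have := hS.1 _ hx
      simp only [ne_eq, Prod.mk.injEq, not_and] at hne this ⊢
      rw [hmem]
      by_cases hg : g = j
      · exact Or.inr ⟨hg, Or.inr ⟨hne hg, this.2.1⟩⟩
      · exact Or.inl ⟨hg, this.2.1⟩
    by_cases ha : ∃ a, (a, i + 1) ∈ S
    · obtain ⟨a, ha⟩ := ha
      have haj : a < j := by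
        rcases lt_trichotomy a j with h | h | h
        · exact h
        · subst h; exact absurd (hS.1 _ ha).2.1 hi1
        · have := hS.2 _ hj _ ha h; simp at this
      obtain ⟨b, hab, hbj, hb⟩ := exists_i_right haj (hS.1 _ ha).2.1 (hl a haj.le)
      refine hS.replace (C' := C') (b := (b, i)) hj ?_ ?_ hCC ?_ ?_
      · intro hbS
        have := hS.2 _ hbS _ hj hbj
        simp at this
      · refine ⟨le_trans (hS.1 _ ha).1 hab, ?_, hj1.2.2⟩
        exact (hmem _ _).2 (Or.inl ⟨by simp; omega, hb⟩)
      · rintro ⟨g, x⟩ hx hne hg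
        simp only at hg ⊢
        have := hS.2 _ hx _ hj (by simp; omega)
        simpa using this
      · rintro ⟨g, x⟩ hx hne hg
        simp only [ne_eq, Prod.mk.injEq, not_and] at hg hne ⊢
        have h1 := hS.2 _ ha _ hx (by simp; omega)
        simp only at h1
        rcases lt_trichotomy g j with h | h | h
        · have := hS.2 _ hx _ hj h; simp only at this; omega
        · have := hne h; omega
        · have := hS.2 _ hj _ hx h; simpa using this
    · push Not at ha
      refine hS.replace (C' := C') (b := (j, i + 1)) hj (ha j) ?_ hCC ?_ ?_
      · refine ⟨hj1.1, (hmem _ _).2 (Or.inr ⟨rfl, Or.inl rfl⟩), ?_⟩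
        simp only; omega
      · rintro ⟨g, x⟩ hx hne hg
        simp only at hg ⊢
        have := hS.2 _ hx _ hj hg
        simp only at this
        have h2 : x ≠ i + 1 := by rintro rfl; exact ha _ hx
        omega
      · rintro ⟨g, x⟩ hx hne hg
        simp only at hg ⊢
        have := hS.2 _ hj _ hx hg
        simp only at this
        omega
  · refine ⟨S, ⟨?_, hS.2⟩, rfl⟩
    rintro ⟨g, x⟩ hx
    have := hS.1 _ hx
    refine ⟨this.1, ?_, this.2.2⟩
    simp only at this ⊢
    rw [hmem]
    by_cases hg : g = j
    · refine Or.inr ⟨hg, Or.inr ⟨?_, this.2.1⟩⟩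
      rintro rfl; exact hj (hg ▸ hx)
    · exact Or.inl ⟨hg, this.2.1⟩

lemma FStep.dec_backward {i j : ℕ} {C C' : ℕ → Finset ℕ} (h : FStep i C j C') {l v : ℕ}
    (hv : v ≠ i + 1) {S : Finset (ℕ × ℕ)} (hS : Dec C' l v S) :
    ∃ S', Dec C l v S' ∧ S'.card = S.card := by
  have hmem := h.mem_iff
  obtain ⟨hi, hi1, hl, hr, -⟩ := h
  have hCC : ∀ x ∈ S, x ≠ (j, i + 1) → x.2 ∈ C x.1 := by
    rintro ⟨g, x⟩ hx hne
    have := (hS.1 _ hx).2.1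
    simp only [ne_eq, Prod.mk.injEq, not_and] at hne this ⊢
    rw [hmem] at this
    rcases this with h | ⟨h, h' | h'⟩
    · exact h.2
    · exact absurd h' (hne h)
    · exact h'.2
  by_cases hj : (j, i + 1) ∈ S
  · have hj1 := hS.1 _ hj
    simp only at hj1
    by_cases hb : ∃ b, j < b ∧ (b, i) ∈ S
    · obtain ⟨b, hjb, hb⟩ := hb
      have hbC : i ∈ C b := hCC _ hb (by simp)
      obtain ⟨a, hja, hab, ha⟩ := exists_i1_left hjb hbC (hr (b + 1) (by omega))
      refine hS.replace (C' := C) (b := (a, i + 1)) hj ?_ ?_ hCC ?_ ?_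
      · intro haS
        have := hS.2 _ hj _ haS hja
        simp at this
      · exact ⟨by simp; omega, ha, hj1.2.2⟩
      · rintro ⟨g, x⟩ hx hne hg
        simp only [ne_eq, Prod.mk.injEq, not_and] at hg hne ⊢
        have h1 := hS.2 _ hx _ hb (by simp; omega)
        simp only at h1
        rcases lt_trichotomy g j with h | h | h
        · have := hS.2 _ hx _ hj h; simpa using this
        · have := hne h; omega
        · have := hS.2 _ hj _ hx h; simp only at this; omega
      · rintro ⟨g, x⟩ hx hne hg
        simp only at hg ⊢
        have := hS.2 _ hj _ hx (by simp; omega)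
        simpa using this
    · push Not at hb
      refine hS.replace (C' := C) (b := (j, i)) hj ?_ ?_ hCC ?_ ?_
      · intro hjS
        have := (hS.1 _ hjS).2.1
        rw [hmem] at this
        simp at this
      · exact ⟨hj1.1, hi, by simp; omega⟩
      · rintro ⟨g, x⟩ hx hne hg
        simp only at hg ⊢
        have := hS.2 _ hx _ hj hg
        simp only at this
        omega
      · rintro ⟨g, x⟩ hx hne hg
        simp only at hg ⊢
        have := hS.2 _ hj _ hx hg
        simp only at this
        have h2 : x ≠ i := by rintro rfl; exact hb _ hg hx
        omega
  · refine ⟨S, ⟨?_, hS.2⟩, rfl⟩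
    intro x hx
    refine ⟨(hS.1 x hx).1, hCC x hx ?_, (hS.1 x hx).2.2⟩
    rintro rfl; exact hj hx

lemma FStep.dec_forward_mid {i j : ℕ} {C C' : ℕ → Finset ℕ} (h : FStep i C j C') {l : ℕ}
    {S : Finset (ℕ × ℕ)} (hS : Dec C l (i + 1) S) : Dec C' l (i + 1) S := by
  refine ⟨fun x hx => ?_, hS.2⟩
  have := hS.1 x hx
  refine ⟨this.1, ?_, this.2.2⟩
  rw [h.mem_iff]
  by_cases hg : x.1 = j
  · exact Or.inr ⟨hg, Or.inr ⟨by omega, this.2.1⟩⟩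
  · exact Or.inl ⟨hg, this.2.1⟩

lemma FStep.dec_backward_mid {i j j' : ℕ} {C C' : ℕ → Finset ℕ} (h : FStep i C j C') {l : ℕ}
    (hjj : j < j') (hj' : i + 1 ∈ C j')
    {S : Finset (ℕ × ℕ)} (hS : Dec C' l (i + 1) S) :
    ∃ S', Dec C l (i + 1) S' ∧ S'.card = S.card := by
  have hmem := h.mem_iff
  have hCC : ∀ x ∈ S, x ≠ (j, i + 1) → x.2 ∈ C x.1 := by
    rintro ⟨g, x⟩ hx hne
    have := (hS.1 _ hx).2.1
    simp only [ne_eq, Prod.mk.injEq, not_and] at hne this ⊢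
    rw [hmem] at this
    rcases this with h | ⟨h, h' | h'⟩
    · exact h.2
    · exact absurd h' (hne h)
    · exact h'.2
  by_cases hj : (j, i + 1) ∈ S
  · refine hS.replace (C' := C) (b := (j', i + 1)) hj ?_ ?_ hCC ?_ ?_
    · intro haS
      have := hS.2 _ hj _ haS hjj
      simp at this
    · exact ⟨le_trans (hS.1 _ hj).1 hjj.le, hj', le_rfl⟩
    · rintro ⟨g, x⟩ hx hne hg
      have h1 := (hS.1 _ hx).2.2
      simp only [ne_eq, Prod.mk.injEq, not_and] at h1 hg hne ⊢
      rcases lt_trichotomy g j with h | h | h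
      · have := hS.2 _ hx _ hj h; simpa using this
      · have := hne h; omega
      · have := hS.2 _ hj _ hx h; simp only at this; omega
    · rintro ⟨g, x⟩ hx hne hg
      simp only at hg ⊢
      have := hS.2 _ hj _ hx (by simp; omega)
      simpa using this
  · refine ⟨S, ⟨?_, hS.2⟩, rfl⟩
    intro x hx
    refine ⟨(hS.1 x hx).1, hCC x hx ?_, (hS.1 x hx).2.2⟩
    rintro rfl; exact hj hx

end KeyPoly

namespace KeyPoly

/-- all decreasing sets have at most `N` elements -/
def Bd (C : ℕ → Finset ℕ) (l v N : ℕ) : Prop := ∀ S, Dec C l v S → S.card ≤ N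

lemma FStep.bd {i j : ℕ} {C C' : ℕ → Finset ℕ} (h : FStep i C j C') {l v N : ℕ}
    (hv : v ≠ i + 1) : Bd C l v N ↔ Bd C' l v N := by
  constructor
  · intro hb S hS
    obtain ⟨S', h1, h2⟩ := h.dec_backward hv hS
    rw [← h2]; exact hb _ h1
  · intro hb S hS
    obtain ⟨S', h1, h2⟩ := h.dec_forward hv hS
    rw [← h2]; exact hb _ h1

lemma FStep.bd_mid {i j j' : ℕ} {C C' : ℕ → Finset ℕ} (h : FStep i C j C') {l N : ℕ}
    (hjj : j < j') (hj' : i + 1 ∈ C j') : Bd C l (i + 1) N ↔ Bd C' l (i + 1) N := by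
  constructor
  · intro hb S hS
    obtain ⟨S', h1, h2⟩ := h.dec_backward_mid hjj hj' hS
    rw [← h2]; exact hb _ h1
  · intro hb S hS
    exact hb _ (h.dec_forward_mid hS)

lemma FStep.GG_eq {i j : ℕ} {C C' : ℕ → Finset ℕ} (h : FStep i C j C') (b : ℕ) :
    GG C' i b = if b ≤ j then GG C i b else GG C i b - 2 := by
  have hmem := h.mem_iff
  have h0 : ∀ g, g ≠ j → sgn C' i g = sgn C i g := by
    intro g hg; simp [sgn, hmem, hg]
  have h1 : sgn C i j = 1 := by simp [sgn, h.1, h.2.1]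
  have h2 : sgn C' i j = -1 := by simp [sgn, hmem]
  induction b with
  | zero => simp [GG]
  | succ b ih =>
    rw [GG_succ, GG_succ, ih]
    rcases lt_trichotomy b j with hb | hb | hb
    · rw [if_pos hb.le, if_pos (by omega), h0 b (by omega)]
    · subst hb; rw [if_pos le_rfl, if_neg (by omega), h1, h2]; ring
    · rw [if_neg (by omega), if_neg (by omega), h0 b (by omega)]; ring

lemma FStep.sgn_eq {i j : ℕ} {C C' : ℕ → Finset ℕ} (h : FStep i C j C') :
    GG C i (j + 1) = GG C i j + 1 := by
  rw [GG_succ]; simp [sgn, h.1, h.2.1]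

lemma FStep.le_max {i j : ℕ} {C C' : ℕ → Finset ℕ} (h : FStep i C j C') (b : ℕ) :
    GG C i b ≤ GG C i (j + 1) := by
  rcases le_or_gt b j with hb | hb
  · have := h.2.2.1 b hb; have := h.sgn_eq; omega
  · exact h.2.2.2.1 b hb

lemma FStep.lt_of_step {i j j' : ℕ} {C C' C'' : ℕ → Finset ℕ} (h : FStep i C j C')
    (h' : FStep i C' j' C'') : j' < j := by
  by_contra hcon
  have h1 := h'.le_max j
  rw [h.GG_eq, h.GG_eq, if_pos le_rfl, if_neg (by omega)] at h1
  have h2 := h.le_max (j' + 1)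
  have := h.sgn_eq
  omega

lemma FStep.unique_right {i j j' : ℕ} {C C' C'' : ℕ → Finset ℕ} (h : FStep i C j C')
    (h' : FStep i C j' C'') : C' = C'' := by
  have hj : j = j' := by
    have h1 := h.sgn_eq
    have h2 := h'.sgn_eq
    rcases lt_trichotomy j j' with hl | hl | hl
    · have := h'.2.2.1 (j + 1) hl; have := h.le_max (j' + 1); omega
    · exact hl
    · have := h.2.2.1 (j' + 1) hl; have := h'.le_max (j + 1); omega
  subst hj
  rw [h.2.2.2.2, h'.2.2.2.2]

lemma FStep.eq_left {i j : ℕ} {C C' : ℕ → Finset ℕ} (h : FStep i C j C') :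
    C = Function.update C' j (insert i ((C' j).erase (i + 1))) := by
  funext g
  by_cases hg : g = j
  · subst hg
    ext x
    simp only [Function.update_self, Finset.mem_insert, Finset.mem_erase, h.mem_iff]
    have h1 := h.1
    have h2 := h.2.1
    by_cases hx : x = i
    · subst hx; simp [h1]
    · by_cases hx' : x = i + 1
      · subst hx'; simp [h2]
      · simp [hx, hx']
  · rw [Function.update_of_ne hg]
    ext x; rw [h.mem_iff]; simp [hg]

lemma FStep.unique_left {i j j' : ℕ} {C C1 C' : ℕ → Finset ℕ} (h : FStep i C j C')
    (h' : FStep i C1 j' C') : C = C1 := by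
  have hj : j = j' := by
    have a1 : ∀ b, b ≤ j → GG C' i b ≤ GG C' i j := fun b hb => by
      rw [h.GG_eq, h.GG_eq, if_pos hb, if_pos le_rfl]; exact h.2.2.1 b hb
    have a2 : ∀ b, j < b → GG C' i b < GG C' i j := fun b hb => by
      rw [h.GG_eq, h.GG_eq, if_neg (by omega), if_pos le_rfl]
      have := h.2.2.2.1 b hb; have := h.sgn_eq; omega
    have b1 : ∀ b, b ≤ j' → GG C' i b ≤ GG C' i j' := fun b hb => by
      rw [h'.GG_eq, h'.GG_eq, if_pos hb, if_pos le_rfl]; exact h'.2.2.1 b hb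
    have b2 : ∀ b, j' < b → GG C' i b < GG C' i j' := fun b hb => by
      rw [h'.GG_eq, h'.GG_eq, if_neg (by omega), if_pos le_rfl]
      have := h'.2.2.2.1 b hb; have := h'.sgn_eq; omega
    rcases lt_trichotomy j j' with hl | hl | hl
    · have := a2 _ hl; have := b1 _ hl.le; omega
    · exact hl
    · have := b2 _ hl; have := a1 _ hl.le; omega
  subst hj
  rw [h.eq_left, h'.eq_left]

/-- the maximum of the partial sums is `r` (the length of the rest of the string) -/
def MaxG (C : ℕ → Finset ℕ) (i r : ℕ) : Prop :=
  (∀ b, GG C i b ≤ r) ∧ ∃ b, GG C i b = r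

lemma GG_const {C : ℕ → Finset ℕ} {M : ℕ} (hM : ∀ h, M < h → C h = ∅) (i b : ℕ) (hb : M < b) :
    GG C i b = GG C i (M + 1) := by
  induction b, hb using Nat.le_induction with
  | base => rfl
  | succ b hb ih => rw [GG_succ, ih]; simp [sgn, hM b hb]

lemma exists_MaxG {C : ℕ → Finset ℕ} {M : ℕ} (hM : ∀ h, M < h → C h = ∅) (i : ℕ) :
    ∃ r, MaxG C i r := by
  obtain ⟨b, -, hb⟩ := Finset.exists_max_image (Finset.range (M + 2)) (GG C i) ⟨0, by simp⟩
  have h0 : 0 ≤ GG C i b := by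
    have := hb 0 (by simp); simpa [GG] using this
  refine ⟨(GG C i b).toNat, fun c => ?_, b, ?_⟩
  · rw [Int.toNat_of_nonneg h0]
    by_cases hc : c < M + 2
    · exact hb c (by simpa using hc)
    · rw [GG_const hM i c (by omega)]; exact hb _ (by simp)
  · rw [Int.toNat_of_nonneg h0]

lemma MaxG.step {C : ℕ → Finset ℕ} {i r : ℕ} (h : MaxG C i (r + 1)) :
    ∃ j C', FStep i C j C' := by
  obtain ⟨hle, hex⟩ := h
  have hs := Nat.find_spec hex
  have hm := fun b => Nat.find_min hex (m := b)
  generalize Nat.find hex = b at hs hm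
  cases b with
  | zero => simp [GG] at hs; omega
  | succ j =>
    have hlt : ∀ b ≤ j, GG C i b ≤ r := by
      intro b hb
      have h1 := hle b
      have h2 := hm b (by omega)
      push_cast at h1 h2; omega
    rw [GG_succ] at hs
    have h1 := hlt j le_rfl
    have h2 := sgn_le C i j
    push_cast at hs
    have h3 : sgn C i j = 1 := by omega
    refine ⟨j, _, ?_, ?_, ?_, ?_, rfl⟩
    · by_contra hc; unfold sgn at h3; rw [if_neg hc] at h3; split_ifs at h3 <;> omega
    · intro hc; unfold sgn at h3; rw [if_pos hc] at h3; split_ifs at h3 <;> omega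
    · intro b hb; have := hlt b hb; omega
    · intro b hb; have := hle b; rw [GG_succ]; push_cast at this; omega

lemma FStep.max_eq {i j r : ℕ} {C C' : ℕ → Finset ℕ} (h : FStep i C j C')
    (hr : MaxG C i r) : ∃ r', r = r' + 1 ∧ MaxG C' i r' := by
  have h1 : GG C i (j + 1) = r := by
    obtain ⟨b, hb⟩ := hr.2
    have := h.le_max b; have := hr.1 (j + 1); omega
  have h2 := h.sgn_eq
  have h3 := h.2.2.1 0 (by omega)
  have h4 : GG C i 0 = 0 := by simp [GG]
  refine ⟨r - 1, by omega, fun b => ?_, j, ?_⟩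
  · rw [h.GG_eq]
    split_ifs with hb
    · have := h.2.2.1 b hb; omega
    · have := h.le_max b; omega
  · rw [h.GG_eq, if_pos le_rfl]; omega

/-- head of an `i`-string -/
def Head (C : ℕ → Finset ℕ) (i M : ℕ) : Prop := ∀ b, GG C i b ≤ GG C i (M + 1)

lemma exists_prev {C : ℕ → Finset ℕ} {M : ℕ} (hM : ∀ h, M < h → C h = ∅) {i : ℕ}
    (hh : ¬ Head C i M) : ∃ j C1, FStep i C1 j C := by
  obtain ⟨r, hr⟩ := exists_MaxG hM i
  have hlast : GG C i (M + 1) < r := by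
    unfold Head at hh; push Not at hh
    obtain ⟨b, hb⟩ := hh
    have := hr.1 b; omega
  have hex : ∃ k, ∀ b, k ≤ b → GG C i b < r :=
    ⟨M + 1, fun b hb => by rw [GG_const hM i b (by omega)]; exact hlast⟩
  have hs := Nat.find_spec hex
  have hm := fun b => Nat.find_min hex (m := b)
  generalize Nat.find hex = k at hs hm
  obtain ⟨b0, hb0⟩ := hr.2
  cases k with
  | zero => have := hs b0 (by omega); omega
  | succ j =>
    have hj : GG C i j = r := by
      have h1 := hm j (by omega)
      push Not at h1
      obtain ⟨b, hb, hb'⟩ := h1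
      have h2 : b = j := by
        by_contra hne
        have := hs b (by omega); omega
      subst h2; have := hr.1 b; omega
    have hj1 := hs (j + 1) le_rfl
    rw [GG_succ] at hj1
    have h3 : i + 1 ∈ C j := by
      by_contra hc; unfold sgn at hj1; rw [if_neg hc] at hj1; split_ifs at hj1 <;> omega
    have h4 : i ∉ C j := by
      intro hc; unfold sgn at hj1; rw [if_pos hc] at hj1; split_ifs at hj1; omega
    have hsj : sgn C i j = -1 := by simp [sgn, h3, h4]
    set C1 := Function.update C j (insert i ((C j).erase (i + 1))) with hC1
    have hne : ∀ g, g ≠ j → C1 g = C g := fun g hg => by simp [hC1, hg]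
    have hself : C1 j = insert i ((C j).erase (i + 1)) := by simp [hC1]
    have hsj1 : sgn C1 i j = 1 := by simp [sgn, hself]
    have hGG : ∀ b, GG C1 i b = if b ≤ j then GG C i b else GG C i b + 2 := by
      intro b
      induction b with
      | zero => simp [GG]
      | succ b ih =>
        rw [GG_succ, GG_succ, ih]
        rcases lt_trichotomy b j with hb | hb | hb
        · rw [if_pos hb.le, if_pos (by omega), sgn, hne b (by omega)]; rfl
        · subst hb; rw [if_pos le_rfl, if_neg (by omega), hsj, hsj1]; ring
        · rw [if_neg (by omega), if_neg (by omega), sgn, hne b (by omega)]; unfold sgn; ring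
    refine ⟨j, C1, ?_, ?_, ?_, ?_, ?_⟩
    · simp [hself]
    · simp [hself]
    · intro b hb; rw [hGG, hGG, if_pos hb, if_pos le_rfl, hj]; exact hr.1 b
    · intro b hb
      rw [hGG, hGG, if_neg (by omega), if_neg (by omega), GG_succ, hsj]
      have := hs b hb; omega
    · funext g
      by_cases hg : g = j
      · subst hg
        ext x
        simp only [Function.update_self, Finset.mem_insert, Finset.mem_erase, hself]
        by_cases hx : x = i + 1
        · subst hx; simp [h3]
        · by_cases hx' : x = i
          · subst hx'; simp [h4]
          · simp [hx, hx']
      · rw [Function.update_of_ne hg, hne g hg]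

lemma Head.no_prev {C C1 : ℕ → Finset ℕ} {M : ℕ} (hM : ∀ h, M < h → C h = ∅) {i j : ℕ}
    (hh : Head C i M) (h : FStep i C1 j C) : False := by
  have h1 := hh j
  have hj : j ≤ M := by
    by_contra hc
    have h2 : i + 1 ∈ C j := by rw [h.mem_iff]; simp
    rw [hM j (by omega)] at h2; simp at h2
  rw [h.GG_eq, h.GG_eq, if_pos le_rfl, if_neg (by omega)] at h1
  have := h.le_max (M + 1); have := h.sgn_eq; omega

/-- tableau of column lengths `z`, encoded by its columns -/
def IsTab (n : ℕ) (z : ℕ → ℕ) (C : ℕ → Finset ℕ) : Prop :=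
  (∀ j, C j ⊆ Finset.Icc 1 n ∧ (C j).card = z j) ∧
  ∀ j, 1 ≤ j → ∀ v, ((C (j + 1)).filter (· < v)).card ≤ ((C j).filter (· < v)).card

lemma card_filter_succ (s : Finset ℕ) (v : ℕ) :
    (s.filter (· < v + 1)).card = (s.filter (· < v)).card + if v ∈ s then 1 else 0 := by
  have : s.filter (· < v + 1) = s.filter (· < v) ∪ (if v ∈ s then {v} else ∅) := by
    ext x; simp only [Finset.mem_filter, Finset.mem_union]
    split_ifs with h
    · simp only [Finset.mem_singleton]; constructor
      · rintro ⟨a, b⟩; by_cases x = v <;> [right; left] <;> [assumption; exact ⟨a, by omega⟩]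
      · rintro (⟨a, b⟩ | rfl) <;> [exact ⟨a, by omega⟩; exact ⟨h, by omega⟩]
    · simp only [Finset.notMem_empty, or_false]; constructor
      · rintro ⟨a, b⟩; refine ⟨a, ?_⟩; rcases Nat.lt_succ_iff_lt_or_eq.1 b with h' | rfl
        · exact h'
        · exact absurd a h
      · rintro ⟨a, b⟩; exact ⟨a, by omega⟩
  rw [this, Finset.card_union_of_disjoint]
  · split_ifs <;> simp
  · split_ifs <;> simp

lemma card_filter_swap (s : Finset ℕ) (i v : ℕ) (hi : i ∈ s) (hi1 : i + 1 ∉ s) :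
    ((insert (i + 1) (s.erase i)).filter (· < v)).card + (if v = i + 1 then 1 else 0)
      = (s.filter (· < v)).card := by
  rcases lt_trichotomy v (i + 1) with h | h | h
  · rw [if_neg (by omega), add_zero]
    congr 1; ext x
    simp only [Finset.mem_filter, Finset.mem_insert, Finset.mem_erase]
    constructor
    · rintro ⟨rfl | ⟨a, b⟩, c⟩ <;> [omega; exact ⟨b, c⟩]
    · rintro ⟨a, b⟩; exact ⟨Or.inr ⟨by omega, a⟩, b⟩
  · subst h
    rw [if_pos rfl, card_filter_succ s i, if_pos hi]
    congr 2; ext x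
    simp only [Finset.mem_filter, Finset.mem_insert, Finset.mem_erase]
    constructor
    · rintro ⟨rfl | ⟨a, b⟩, c⟩ <;> [omega; exact ⟨b, by omega⟩]
    · rintro ⟨a, b⟩; exact ⟨Or.inr ⟨by omega, a⟩, by omega⟩
  · rw [if_neg (by omega), add_zero, Finset.filter_insert, if_pos h,
      Finset.card_insert_of_notMem (by simp [hi1]), Finset.filter_erase,
      Finset.card_erase_of_mem (by simp [hi]; omega)]
    have : 0 < (s.filter (· < v)).card := Finset.card_pos.2 ⟨i, by simp [hi]; omega⟩
    omega

lemma FStep.isTab_iff {n i j : ℕ} {z : ℕ → ℕ} {C C' : ℕ → Finset ℕ} (h : FStep i C j C')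
    (hi : 1 ≤ i) (hin : i + 1 ≤ n) : IsTab n z C ↔ IsTab n z C' := by
  have hmem := h.mem_iff
  have hne : ∀ g, g ≠ j → C' g = C g := fun g hg => by rw [h.2.2.2.2, Function.update_of_ne hg]
  have hself : C' j = insert (i + 1) ((C j).erase i) := by rw [h.2.2.2.2, Function.update_self]
  have hcard : ∀ v, ((C' j).filter (· < v)).card + (if v = i + 1 then 1 else 0)
      = ((C j).filter (· < v)).card := by
    intro v; rw [hself]; exact card_filter_swap _ _ _ h.1 h.2.1
  have hfst : (∀ j, C j ⊆ Finset.Icc 1 n ∧ (C j).card = z j) ↔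
      (∀ j, C' j ⊆ Finset.Icc 1 n ∧ (C' j).card = z j) := by
    refine forall_congr' fun g => ?_
    by_cases hg : g = j
    · subst hg
      refine and_congr ?_ ?_
      · constructor
        · intro hs x hx
          rw [hmem] at hx
          rcases hx with hx | ⟨-, rfl | hx⟩
          · exact hs hx.2
          · simp; omega
          · exact hs hx.2
        · intro hs x hx
          by_cases hxi : x = i
          · subst hxi; simp; omega
          · exact hs ((hmem _ _).2 (Or.inr ⟨rfl, Or.inr ⟨hxi, hx⟩⟩))
      · rw [hself, Finset.card_insert_of_notMem (by simp [h.2.1]), Finset.card_erase_of_mem h.1]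
        have := Finset.card_pos.2 ⟨i, h.1⟩
        rw [Nat.sub_add_cancel this]
    · rw [hne g hg]
  constructor
  · rintro ⟨h1, h2⟩
    refine ⟨hfst.1 h1, fun g hg v => ?_⟩
    have hgv := h2 g hg
    by_cases hgj : g = j
    · subst hgj
      rw [hne (g + 1) (by omega)]
      have hc := hcard v
      by_cases hv : v = i + 1
      · subst hv
        rw [if_pos rfl] at hc
        by_contra hcon
        have e1 := hgv i
        have e2 := hgv (i + 1)
        have e3 := hgv (i + 1 + 1)
        have q1 := card_filter_succ (C g) i
        have q2 := card_filter_succ (C g) (i + 1)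
        have q3 := card_filter_succ (C (g + 1)) i
        have q4 := card_filter_succ (C (g + 1)) (i + 1)
        rw [if_pos h.1] at q1
        rw [if_neg h.2.1] at q2
        by_cases hm : i ∈ C (g + 1)
        · obtain ⟨a, ha1, ha2, ha3⟩ := exists_i1_left (j := g) (b := g + 1) (by omega) hm
            (h.2.2.2.1 (g + 1 + 1) (by omega))
          have : a = g + 1 := by omega
          subst this
          rw [if_pos ha3] at q4; rw [if_pos hm] at q3
          omega
        · rw [if_neg hm] at q3
          omega
      · rw [if_neg hv] at hc
        rw [show ((C' g).filter (· < v)).card = _ from hc]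
        exact hgv v
    · rw [hne g hgj]
      by_cases hgj' : g + 1 = j
      · subst hgj'
        have := hcard v
        have := hgv v
        omega
      · rw [hne _ hgj']; exact hgv v
  · rintro ⟨h1, h2⟩
    refine ⟨hfst.2 h1, fun g hg v => ?_⟩
    have hgv := h2 g hg
    by_cases hgj : g + 1 = j
    · subst hgj
      rw [hne g (by omega)] at hgv
      have hc := hcard v
      by_cases hv : v = i + 1
      · subst hv
        rw [if_pos rfl] at hc
        by_contra hcon
        have e1 := hgv i
        have e2 := hgv (i + 1)
        have e3 := hgv (i + 1 + 1)
        have q1 := card_filter_succ (C' (g + 1)) i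
        have q2 := card_filter_succ (C' (g + 1)) (i + 1)
        have q3 := card_filter_succ (C g) i
        have q4 := card_filter_succ (C g) (i + 1)
        rw [if_neg (by simp [hmem])] at q1
        rw [if_pos (by simp [hmem])] at q2
        by_cases hm : i + 1 ∈ C g
        · obtain ⟨b, hb1, hb2, hb3⟩ := exists_i_right (a := g) (j := g + 1) (by omega) hm
            (h.2.2.1 g (by omega))
          have : b = g := by omega
          subst this
          rw [if_pos hb3] at q3; rw [if_pos hm] at q4
          omega
        · rw [if_neg hm] at q4
          omega
      · rw [if_neg hv] at hc
        rw [← show ((C' (g + 1)).filter (· < v)).card = _ from hc]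
        exact hgv v
    · rw [hne _ hgj] at hgv
      by_cases hgj' : g = j
      · subst hgj'
        have := hcard v
        have := hgv v
        omega
      · rw [hne _ hgj'] at hgv; exact hgv v

end KeyPoly

namespace KeyPoly

/-- the crystal operator `f_i` as a function (identity at tails) -/
def fop (i : ℕ) (C : ℕ → Finset ℕ) : ℕ → Finset ℕ :=
  if h : ∃ C' j, FStep i C j C' then h.choose else C

lemma FStep.fop_eq {i j : ℕ} {C C' : ℕ → Finset ℕ} (h : FStep i C j C') : fop i C = C' := by
  have hex : ∃ C' j, FStep i C j C' := ⟨C', j, h⟩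
  unfold fop
  rw [dif_pos hex]
  obtain ⟨j', hj'⟩ := hex.choose_spec
  exact hj'.unique_right h

lemma MaxG.fop_step {i r : ℕ} {C : ℕ → Finset ℕ} (h : MaxG C i (r + 1)) :
    ∃ j, FStep i C j (fop i C) := by
  obtain ⟨j, C', hs⟩ := h.step
  exact ⟨j, by rw [hs.fop_eq]; exact hs⟩

lemma MaxG.unique {i r r' : ℕ} {C : ℕ → Finset ℕ} (h : MaxG C i r) (h' : MaxG C i r') :
    r = r' := by
  obtain ⟨b, hb⟩ := h.2
  obtain ⟨b', hb'⟩ := h'.2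
  have := h.1 b'; have := h'.1 b; omega

lemma MaxG.iter {i r : ℕ} {C : ℕ → Finset ℕ} (h : MaxG C i r) (k : ℕ) (hk : k ≤ r) :
    MaxG ((fop i)^[k] C) i (r - k) := by
  induction k with
  | zero => simpa using h
  | succ k ih =>
    have h1 := ih (by omega)
    rw [Function.iterate_succ_apply']
    rw [show r - k = (r - (k + 1)) + 1 by omega] at h1
    obtain ⟨j, hj⟩ := h1.fop_step
    obtain ⟨r', h2, h3⟩ := hj.max_eq h1
    rwa [show r - (k + 1) = r' by omega]

lemma MaxG.iter_step {i r : ℕ} {C : ℕ → Finset ℕ} (h : MaxG C i r) (k : ℕ) (hk : k < r) :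
    ∃ j, FStep i ((fop i)^[k] C) j ((fop i)^[k + 1] C) := by
  have h1 := h.iter k hk.le
  rw [Function.iterate_succ_apply']
  rw [show r - k = (r - (k + 1)) + 1 by omega] at h1
  exact h1.fop_step

/-- number of `t ≤ m` with `p t ≥ v` -/
def cnt (p : ℕ → ℕ) (m v : ℕ) : ℕ := ((Finset.Icc 1 m).filter (fun t => v ≤ p t)).card

/-- the Demazure condition -/
def InD (z : ℕ → ℕ) (C : ℕ → Finset ℕ) (p : ℕ → ℕ) : Prop :=
  ∀ l, 1 ≤ l → ∀ v, Bd C l v (cnt p (z l) v)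

lemma FStep.inD_back {i j : ℕ} {C C' : ℕ → Finset ℕ} (h : FStep i C j C') {z p : ℕ → ℕ}
    (hD : InD z C' p) : InD z C p := by
  intro l hl v
  by_cases hv : v = i + 1
  · subst hv
    intro S hS
    exact hD l hl _ S (h.dec_forward_mid hS)
  · exact (h.bd hv).2 (hD l hl v)

lemma FStep.inD_iff {i j j' : ℕ} {C C' C'' : ℕ → Finset ℕ} (h : FStep i C j C')
    (h' : FStep i C' j' C'') {z p : ℕ → ℕ} : InD z C' p ↔ InD z C'' p := by
  refine forall_congr' fun l => forall_congr' fun hl => forall_congr' fun v => ?_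
  by_cases hv : v = i + 1
  · subst hv
    exact h'.bd_mid (h.lt_of_step h') ((h.mem_iff _ _).2 (Or.inr ⟨rfl, Or.inl rfl⟩))
  · exact h'.bd hv

lemma MaxG.inD_one {i r : ℕ} {C : ℕ → Finset ℕ} (h : MaxG C i r) {z p : ℕ → ℕ} (k : ℕ)
    (hk : k + 1 ≤ r) : InD z ((fop i)^[k + 1] C) p ↔ InD z (fop i C) p := by
  induction k with
  | zero => rfl
  | succ k ih =>
    rw [← ih (by omega)]
    obtain ⟨j, hj⟩ := h.iter_step k (by omega)
    obtain ⟨j', hj'⟩ := h.iter_step (k + 1) (by omega)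
    exact (hj.inD_iff hj').symm

lemma MaxG.inD_zero {i r : ℕ} {C : ℕ → Finset ℕ} (h : MaxG C i r) {z p : ℕ → ℕ} (k : ℕ)
    (hk : k ≤ r) (hD : InD z ((fop i)^[k] C) p) : InD z C p := by
  induction k with
  | zero => exact hD
  | succ k ih =>
    obtain ⟨j, hj⟩ := h.iter_step k (by omega)
    exact ih (by omega) (hj.inD_back hD)

lemma MaxG.bd_iter {i r : ℕ} {C : ℕ → Finset ℕ} (h : MaxG C i r) {l v N : ℕ} (k : ℕ)
    (hk : k ≤ r) (hv : v ≠ i + 1) : Bd ((fop i)^[k] C) l v N ↔ Bd C l v N := by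
  induction k with
  | zero => rfl
  | succ k ih =>
    obtain ⟨j, hj⟩ := h.iter_step k (by omega)
    rw [← ih (by omega)]
    exact (hj.bd hv).symm

lemma Head.dec_insert {C : ℕ → Finset ℕ} {i M l h : ℕ} (hM : ∀ h, M < h → C h = ∅)
    (hh : Head C i M) {S : Finset (ℕ × ℕ)} (hS : Dec C l (i + 1) S) (hmem : (h, i + 1) ∈ S) :
    ∃ S', Dec C l i S' ∧ S'.card = S.card + 1 := by
  have h1 := hS.1 _ hmem
  have hhM : h < M + 1 := by
    by_contra hc
    have := h1.2.1
    rw [hM h (by omega)] at this; simp at this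
  obtain ⟨b, hb1, hb2, hb3⟩ := exists_i_right hhM h1.2.1 (hh h)
  refine ⟨insert (b, i) S, ⟨?_, ?_⟩, ?_⟩
  · intro x hx
    rw [Finset.mem_insert] at hx
    rcases hx with rfl | hx
    · exact ⟨le_trans h1.1 hb1, hb3, le_rfl⟩
    · have := hS.1 x hx; exact ⟨this.1, this.2.1, by omega⟩
  · intro x hx y hy hxy
    rw [Finset.mem_insert] at hx hy
    rcases hx with rfl | hx <;> rcases hy with rfl | hy
    · omega
    · have a1 := (hS.1 y hy).2.2
      simp only at hxy
      have a2 := hS.2 _ hmem _ hy (by simp only; omega)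
      simp only at a2; omega
    · have a1 := (hS.1 x hx).2.2
      simp only; omega
    · exact hS.2 x hx y hy hxy
  · rw [Finset.card_insert_of_notMem]
    intro hc
    have := (hS.1 _ hc).2.2
    simp at this

lemma Dec.drop {C : ℕ → Finset ℕ} {i l : ℕ} {S : Finset (ℕ × ℕ)} (hS : Dec C l (i + 1) S) :
    ∃ S', Dec C l (i + 2) S' ∧ S.card ≤ S'.card + 1 := by
  by_cases h : ∃ g, (g, i + 1) ∈ S
  · obtain ⟨g, hg⟩ := h
    refine ⟨S.erase (g, i + 1), ⟨?_, ?_⟩, ?_⟩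
    · rintro ⟨a, x⟩ hx
      have hx' := Finset.mem_of_mem_erase hx
      have hne := Finset.ne_of_mem_erase hx
      have := hS.1 _ hx'
      refine ⟨this.1, this.2.1, ?_⟩
      by_contra hc
      simp only at this hc
      have hxi : x = i + 1 := by omega
      subst hxi
      rcases lt_trichotomy a g with h | h | h
      · have := hS.2 _ hx' _ hg h; simp at this
      · subst h; exact hne rfl
      · have := hS.2 _ hg _ hx' h; simp at this
    · intro a ha b hb
      exact hS.2 a (Finset.mem_of_mem_erase ha) b (Finset.mem_of_mem_erase hb)
    · rw [Finset.card_erase_of_mem hg]; omega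
  · push Not at h
    refine ⟨S, ⟨fun x hx => ?_, hS.2⟩, by omega⟩
    have := hS.1 x hx
    refine ⟨this.1, this.2.1, ?_⟩
    have h2 : x.2 ≠ i + 1 := by
      intro h3; apply h x.1; rw [← h3]; exact hx
    omega

lemma cnt_swap (σ : Equiv.Perm ℕ) (i m v : ℕ) (hv : v ≠ i + 1) :
    cnt (fun t => Equiv.swap i (i + 1) (σ t)) m v = cnt σ m v := by
  unfold cnt
  congr 1
  apply Finset.filter_congr
  intro t _
  simp only [Equiv.swap_apply_def]
  split_ifs with h1 h2 <;> omega

lemma cnt_anti (p : ℕ → ℕ) (m : ℕ) {v v' : ℕ} (h : v ≤ v') : cnt p m v' ≤ cnt p m v := by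
  unfold cnt
  apply Finset.card_le_card
  intro t ht
  simp only [Finset.mem_filter] at ht ⊢
  exact ⟨ht.1, by omega⟩

lemma cnt_le_succ (σ : Equiv.Perm ℕ) (m i : ℕ) : cnt σ m i ≤ cnt σ m (i + 1) + 1 := by
  unfold cnt
  refine le_trans (Finset.card_le_card (t := insert (σ.symm i)
    ((Finset.Icc 1 m).filter (fun t => i + 1 ≤ σ t))) ?_) (Finset.card_insert_le _ _)
  intro t ht
  simp only [Finset.mem_filter, Finset.mem_insert] at ht ⊢
  by_cases h : σ t = i
  · left; rw [← h]; simp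
  · right; exact ⟨ht.1, by omega⟩

lemma MaxG.inD_head {i r M : ℕ} {C : ℕ → Finset ℕ} (h : MaxG C i r)
    (hM : ∀ h, M < h → C h = ∅) (hh : Head C i M) {z : ℕ → ℕ} (σ : Equiv.Perm ℕ)
    (hσ : σ.symm i < σ.symm (i + 1)) (hσ1 : 1 ≤ σ.symm i) (k : ℕ) (hk : k ≤ r) :
    InD z C σ ↔ InD z ((fop i)^[k] C) (fun t => Equiv.swap i (i + 1) (σ t)) := by
  constructor
  · intro hD l hl v
    by_cases hv : v = i + 1
    · subst hv
      intro S hS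
      by_cases hu : σ.symm i ≤ z l
      · obtain ⟨S', hS', hc⟩ := hS.drop
        have h1 := (h.bd_iter k hk (by omega)).2 (hD l hl (i + 2)) S' hS'
        have h2 : cnt σ (z l) (i + 2) + 1 ≤
            cnt (fun t => Equiv.swap i (i + 1) (σ t)) (z l) (i + 1) := by
          unfold cnt
          rw [← Finset.card_insert_of_notMem (a := σ.symm i)]
          · apply Finset.card_le_card
            intro t ht
            simp only [Finset.mem_insert, Finset.mem_filter, Finset.mem_Icc] at ht ⊢
            rcases ht with rfl | ht
            · refine ⟨⟨hσ1, hu⟩, by simp⟩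
            · refine ⟨ht.1, ?_⟩
              rw [Equiv.swap_apply_of_ne_of_ne (by omega) (by omega)]; omega
          · simp
        omega
      · have hS2 : Dec ((fop i)^[k] C) l i S :=
          ⟨fun x hx => ⟨(hS.1 x hx).1, (hS.1 x hx).2.1, by have := (hS.1 x hx).2.2; omega⟩, hS.2⟩
        have h1 := (h.bd_iter k hk (by omega)).2 (hD l hl i) S hS2
        refine le_trans h1 ?_
        unfold cnt
        apply Finset.card_le_card
        intro t ht
        simp only [Finset.mem_filter, Finset.mem_Icc] at ht ⊢
        refine ⟨ht.1, ?_⟩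
        have h3 : σ t ≠ i := by rintro h3; rw [← h3] at hu; simp at hu; omega
        have h4 : σ t ≠ i + 1 := by rintro h4; rw [← h4] at hσ; simp at hσ; omega
        rw [Equiv.swap_apply_of_ne_of_ne h3 h4]; omega
    · rw [cnt_swap _ _ _ _ hv]
      exact (h.bd_iter k hk hv).2 (hD l hl v)
  · intro hD
    have hoth : ∀ l, 1 ≤ l → ∀ v, v ≠ i + 1 → Bd C l v (cnt σ (z l) v) := by
      intro l hl v hv
      rw [← h.bd_iter k hk hv, ← cnt_swap σ i (z l) v hv]
      exact hD l hl v
    intro l hl v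
    by_cases hv : v = i + 1
    · subst hv
      intro S hS
      by_cases hex : ∃ g, (g, i + 1) ∈ S
      · obtain ⟨g, hg⟩ := hex
        obtain ⟨S', hS', hc⟩ := hh.dec_insert hM hS hg
        have h1 := hoth l hl i (by omega) S' hS'
        have h2 := cnt_le_succ σ (z l) i
        omega
      · push Not at hex
        have hS2 : Dec C l (i + 2) S := by
          refine ⟨fun x hx => ?_, hS.2⟩
          have := hS.1 x hx
          refine ⟨this.1, this.2.1, ?_⟩
          have h2 : x.2 ≠ i + 1 := by
            intro h3; apply hex x.1; rw [← h3]; exact hx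
          omega
        exact le_trans (hoth l hl (i + 2) (by omega) S hS2) (cnt_anti _ _ (by omega))
    · exact hoth l hl v hv

end KeyPoly

namespace KeyPoly

/-- weight of a column family -/
def wt (M : ℕ) (C : ℕ → Finset ℕ) : Poly :=
  ∏ j ∈ Finset.range (M + 1), ∏ x ∈ C j, (MvPolynomial.X x : Poly)

lemma FStep.le_bound {i j M : ℕ} {C C' : ℕ → Finset ℕ} (h : FStep i C j C')
    (hM : ∀ h, M < h → C h = ∅) : j ≤ M := by
  by_contra hc
  have := h.1
  rw [hM j (by omega)] at this
  simp at this

lemma FStep.empty_iff {i j M : ℕ} {C C' : ℕ → Finset ℕ} (h : FStep i C j C')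
    (hM : ∀ h, M < h → C h = ∅) : ∀ h, M < h → C' h = ∅ := by
  intro g hg
  have := h.le_bound hM
  rw [h.2.2.2.2, Function.update_of_ne (by omega), hM g hg]

lemma FStep.wt_eq {i j M : ℕ} {C C' : ℕ → Finset ℕ} (h : FStep i C j C')
    (hM : ∀ h, M < h → C h = ∅) :
    (MvPolynomial.X i : Poly) * wt M C' = MvPolynomial.X (i + 1) * wt M C := by
  have hj : j ∈ Finset.range (M + 1) := by have := h.le_bound hM; simp; omega
  unfold wt
  rw [← Finset.mul_prod_erase _ _ hj, ← Finset.mul_prod_erase _ (fun j => ∏ x ∈ C j, _) hj]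
  have h1 : ∏ g ∈ (Finset.range (M + 1)).erase j, ∏ x ∈ C' g, (MvPolynomial.X x : Poly)
      = ∏ g ∈ (Finset.range (M + 1)).erase j, ∏ x ∈ C g, (MvPolynomial.X x : Poly) := by
    apply Finset.prod_congr rfl
    intro g hg
    rw [h.2.2.2.2, Function.update_of_ne (Finset.ne_of_mem_erase hg)]
  have h2 : (MvPolynomial.X i : Poly) * ∏ x ∈ C' j, (MvPolynomial.X x : Poly)
      = MvPolynomial.X (i + 1) * ∏ x ∈ C j, (MvPolynomial.X x : Poly) := by
    rw [h.2.2.2.2, Function.update_self, Finset.prod_insert (by simp [h.2.1]),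
      ← Finset.mul_prod_erase (C j) _ h.1]
    ring
  rw [h1, ← mul_assoc, h2, mul_assoc]

lemma col_swap (s : Finset ℕ) (i : ℕ) :
    (if i ∈ s then (MvPolynomial.X i : Poly) else 1) *
      (if i + 1 ∈ s then (MvPolynomial.X (i + 1) : Poly) else 1) *
      ∏ x ∈ s, (MvPolynomial.X (Equiv.swap i (i + 1) x) : Poly) =
    (if i ∈ s then (MvPolynomial.X (i + 1) : Poly) else 1) *
      (if i + 1 ∈ s then (MvPolynomial.X i : Poly) else 1) *
      ∏ x ∈ s, (MvPolynomial.X x : Poly) := by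
  have h : ∀ (a : ℕ) (A : Poly), (if a ∈ s then A else 1) = ∏ x ∈ s, if x = a then A else 1 := by
    intro a A; rw [Finset.prod_ite_eq']
  simp only [h, ← Finset.prod_mul_distrib]
  apply Finset.prod_congr rfl
  intro x _
  by_cases h1 : x = i
  · subst h1; simp; ring
  · by_cases h2 : x = i + 1
    · subst h2; simp; ring
    · simp [h1, h2, Equiv.swap_apply_of_ne_of_ne h1 h2]

lemma sOp_wt (i M : ℕ) (C : ℕ → Finset ℕ) :
    sOp i (wt M C) = ∏ j ∈ Finset.range (M + 1), ∏ x ∈ C j,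
      (MvPolynomial.X (Equiv.swap i (i + 1) x) : Poly) := by
  simp [sOp, wt, map_prod]

lemma GG_counts (C : ℕ → Finset ℕ) (i b : ℕ) :
    GG C i b = (((Finset.range b).filter (fun j => i ∈ C j)).card : ℤ)
      - ((Finset.range b).filter (fun j => i + 1 ∈ C j)).card := by
  simp [GG, sgn, Finset.sum_sub_distrib]

lemma wt_swap {i M r : ℕ} {C : ℕ → Finset ℕ} (hr : GG C i (M + 1) = r) :
    (MvPolynomial.X i : Poly) ^ r * sOp i (wt M C) = MvPolynomial.X (i + 1) ^ r * wt M C := by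
  set a := ((Finset.range (M + 1)).filter (fun j => i ∈ C j)).card with ha
  set b := ((Finset.range (M + 1)).filter (fun j => i + 1 ∈ C j)).card with hb
  have hab : a = b + r := by
    have := GG_counts C i (M + 1); rw [← ha, ← hb] at this; omega
  have h := Finset.prod_congr (rfl : Finset.range (M + 1) = Finset.range (M + 1))
    (fun j _ => col_swap (C j) i)
  simp only [Finset.prod_mul_distrib, Finset.prod_ite, Finset.prod_const] at h
  rw [← sOp_wt, ← ha, ← hb] at h
  change _ = _ * wt M C at h
  rw [hab] at h
  have hne : (MvPolynomial.X i : Poly) ^ b * MvPolynomial.X (i + 1) ^ b ≠ 0 :=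
    mul_ne_zero (pow_ne_zero _ (MvPolynomial.X_ne_zero _)) (pow_ne_zero _ (MvPolynomial.X_ne_zero _))
  apply mul_left_cancel₀ hne
  rw [pow_add, pow_add] at h
  linear_combination h

lemma MaxG.empty_iter {i r M : ℕ} {C : ℕ → Finset ℕ} (h : MaxG C i r)
    (hM : ∀ h, M < h → C h = ∅) (k : ℕ) (hk : k ≤ r) :
    ∀ h, M < h → (fop i)^[k] C h = ∅ := by
  induction k with
  | zero => exact hM
  | succ k ih =>
    obtain ⟨j, hj⟩ := h.iter_step k (by omega)
    exact hj.empty_iff (ih (by omega))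

lemma MaxG.wt_iter {i r M : ℕ} {C : ℕ → Finset ℕ} (h : MaxG C i r)
    (hM : ∀ h, M < h → C h = ∅) (k : ℕ) (hk : k ≤ r) :
    (MvPolynomial.X i : Poly) ^ k * wt M ((fop i)^[k] C) = MvPolynomial.X (i + 1) ^ k * wt M C := by
  induction k with
  | zero => simp
  | succ k ih =>
    obtain ⟨j, hj⟩ := h.iter_step k (by omega)
    have h1 := hj.wt_eq (h.empty_iter hM k (by omega))
    have h2 := ih (by omega)
    rw [pow_succ, pow_succ]
    linear_combination (MvPolynomial.X i : Poly) ^ k * h1 + MvPolynomial.X (i + 1) * h2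

lemma MaxG.head_eq {i r M : ℕ} {C : ℕ → Finset ℕ} (h : MaxG C i r) (hh : Head C i M) :
    GG C i (M + 1) = r := by
  obtain ⟨b, hb⟩ := h.2
  have := hh b; have := h.1 (M + 1); omega

lemma MaxG.sOp_head {i r M : ℕ} {C : ℕ → Finset ℕ} (h : MaxG C i r)
    (hM : ∀ h, M < h → C h = ∅) (hh : Head C i M) :
    sOp i (wt M C) = wt M ((fop i)^[r] C) := by
  have h1 := wt_swap (h.head_eq hh)
  rw [← h.wt_iter hM r le_rfl] at h1
  exact mul_left_cancel₀ (pow_ne_zero _ (MvPolynomial.X_ne_zero _)) h1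

/-- `Q` is the divided difference of `P` -/
def RhoRel (i : ℕ) (P Q : Poly) : Prop :=
  ((MvPolynomial.X i : Poly) - MvPolynomial.X (i + 1)) * Q =
    MvPolynomial.X i * P - sOp i (MvPolynomial.X i * P)

lemma X_sub_ne (i : ℕ) : (MvPolynomial.X i : Poly) - MvPolynomial.X (i + 1) ≠ 0 := by
  rw [sub_ne_zero]
  intro h
  have := MvPolynomial.X_injective h
  omega

lemma RhoRel.eq {i : ℕ} {P Q : Poly} (h : RhoRel i P Q) : rhoOp i P = Q := by
  have hex : ∃ Q : Poly, ((MvPolynomial.X i : Poly) - MvPolynomial.X (i + 1)) * Q =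
    MvPolynomial.X i * P - sOp i (MvPolynomial.X i * P) := ⟨Q, h⟩
  unfold rhoOp
  rw [dif_pos hex]
  have := hex.choose_spec
  exact mul_left_cancel₀ (X_sub_ne i) (this.trans h.symm)

lemma sOp_mul (i : ℕ) (P Q : Poly) : sOp i (P * Q) = sOp i P * sOp i Q := by simp [sOp]
lemma sOp_sub (i : ℕ) (P Q : Poly) : sOp i (P - Q) = sOp i P - sOp i Q := by simp [sOp]
lemma sOp_Xi (i : ℕ) : sOp i (MvPolynomial.X i) = MvPolynomial.X (i + 1) := by simp [sOp]
lemma sOp_Xi1 (i : ℕ) : sOp i (MvPolynomial.X (i + 1)) = MvPolynomial.X i := by simp [sOp]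
lemma sOp_sOp (i : ℕ) (P : Poly) : sOp i (sOp i P) = P := by
  unfold sOp
  rw [MvPolynomial.rename_rename]
  have : (⇑(Equiv.swap i (i + 1)) ∘ ⇑(Equiv.swap i (i + 1))) = id := by ext x; simp
  rw [this, MvPolynomial.rename_id]
  rfl

lemma RhoRel.idem {i : ℕ} {P Q : Poly} (h : RhoRel i P Q) : RhoRel i Q Q := by
  unfold RhoRel at h ⊢
  have h2 := congrArg (sOp i) h
  rw [sOp_mul, sOp_sub, sOp_sub, sOp_sOp, sOp_Xi, sOp_Xi1] at h2
  have h3 : sOp i Q = Q := by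
    apply mul_left_cancel₀ (X_sub_ne i)
    linear_combination -h2 - h
  rw [sOp_mul, sOp_Xi, h3]; ring

lemma RhoRel.sum {α : Type*} {i : ℕ} (s : Finset α) {P Q : α → Poly}
    (h : ∀ a ∈ s, RhoRel i (P a) (Q a)) : RhoRel i (∑ a ∈ s, P a) (∑ a ∈ s, Q a) := by
  unfold RhoRel at *
  simp only [Finset.mul_sum]
  have : sOp i (∑ a ∈ s, MvPolynomial.X i * P a) = ∑ a ∈ s, sOp i (MvPolynomial.X i * P a) := by
    simp only [sOp, map_sum]
  rw [this, ← Finset.sum_sub_distrib]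
  exact Finset.sum_congr rfl h

lemma RhoRel.zero (i : ℕ) : RhoRel i 0 0 := by simp [RhoRel, sOp]

lemma MaxG.rho_string {i r M : ℕ} {C : ℕ → Finset ℕ} (h : MaxG C i r)
    (hM : ∀ h, M < h → C h = ∅) (hh : Head C i M) :
    RhoRel i (wt M C) (∑ k ∈ Finset.range (r + 1), wt M ((fop i)^[k] C)) := by
  unfold RhoRel
  rw [sOp_mul, sOp_Xi, h.sOp_head hM hh]
  have : ∀ m, m ≤ r → ((MvPolynomial.X i : Poly) - MvPolynomial.X (i + 1)) *
      (∑ k ∈ Finset.range (m + 1), wt M ((fop i)^[k] C)) =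
      MvPolynomial.X i * wt M C - MvPolynomial.X (i + 1) * wt M ((fop i)^[m] C) := by
    intro m
    induction m with
    | zero => intro _; simp; ring
    | succ m ih =>
      intro hm
      obtain ⟨j, hj⟩ := h.iter_step m (by omega)
      have h1 := hj.wt_eq (h.empty_iter hM m (by omega))
      rw [Finset.sum_range_succ, mul_add, ih (by omega)]
      linear_combination h1
  exact this r le_rfl

end KeyPoly

namespace KeyPoly

lemma IsTab.empty {n M : ℕ} {z : ℕ → ℕ} {C : ℕ → Finset ℕ} (h : IsTab n z C)
    (hz : ∀ j, M < j → z j = 0) : ∀ j, M < j → C j = ∅ := by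
  intro j hj
  have := (h.1 j).2
  rw [hz j hj] at this
  exact Finset.card_eq_zero.mp this

lemma finite_tabs (n M : ℕ) (z : ℕ → ℕ) (hz : ∀ j, M < j → z j = 0) :
    {C : ℕ → Finset ℕ | IsTab n z C}.Finite := by
  apply Set.Finite.subset (Set.Finite.image
    (fun (g : Fin (M + 1) → Finset ℕ) (j : ℕ) => if h : j < M + 1 then g ⟨j, h⟩ else ∅)
    (Finset.finite_toSet (Fintype.piFinset (fun _ : Fin (M + 1) => (Finset.Icc 1 n).powerset))))
  intro C hC
  have hC' : IsTab n z C := hC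
  refine ⟨fun j => C j, ?_, ?_⟩
  · simp only [Finset.mem_coe, Fintype.mem_piFinset, Finset.mem_powerset]
    intro j
    exact (hC'.1 j).1
  · funext j
    by_cases h : j < M + 1
    · simp [h]
    · simp [h, hC'.empty hz j (by omega)]

/-- the finset of all tableaux -/
def tabs (n M : ℕ) (z : ℕ → ℕ) (hz : ∀ j, M < j → z j = 0) : Finset (ℕ → Finset ℕ) :=
  (finite_tabs n M z hz).toFinset

lemma mem_tabs {n M : ℕ} {z : ℕ → ℕ} {hz : ∀ j, M < j → z j = 0} {C : ℕ → Finset ℕ} :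
    C ∈ tabs n M z hz ↔ IsTab n z C := by simp [tabs]

/-- string length -/
def phi (i : ℕ) (C : ℕ → Finset ℕ) : ℕ := if h : ∃ r, MaxG C i r then h.choose else 0

lemma phi_spec {C : ℕ → Finset ℕ} {M : ℕ} (hM : ∀ h, M < h → C h = ∅) (i : ℕ) :
    MaxG C i (phi i C) := by
  have h := exists_MaxG hM i
  unfold phi
  rw [dif_pos h]
  exact h.choose_spec

lemma GG_le (C : ℕ → Finset ℕ) (i b : ℕ) : GG C i b ≤ b := by
  induction b with
  | zero => simp [GG]
  | succ b ih => rw [GG_succ]; have := sgn_le C i b; push_cast; omega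

lemma MaxG.le_bound {C : ℕ → Finset ℕ} {M i r : ℕ} (hM : ∀ h, M < h → C h = ∅)
    (h : MaxG C i r) : r ≤ M + 1 := by
  obtain ⟨b, hb⟩ := h.2
  rcases le_or_gt b M with h1 | h1
  · have := GG_le C i b; omega
  · rw [GG_const hM i b h1] at hb
    have := GG_le C i (M + 1); omega

lemma exists_head {n M i : ℕ} {z : ℕ → ℕ} (hz : ∀ j, M < j → z j = 0) (hi : 1 ≤ i)
    (hin : i + 1 ≤ n) (m : ℕ) : ∀ (C : ℕ → Finset ℕ) (r : ℕ), IsTab n z C → MaxG C i r →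
    M + 1 ≤ r + m → ∃ C0 r0 k, IsTab n z C0 ∧ Head C0 i M ∧ MaxG C0 i r0 ∧ k ≤ r0 ∧
      (fop i)^[k] C0 = C := by
  induction m with
  | zero =>
    intro C r hC hr hm
    by_cases hh : Head C i M
    · exact ⟨C, r, 0, hC, hh, hr, by omega, rfl⟩
    · obtain ⟨j, C1, h1⟩ := exists_prev (hC.empty hz) hh
      have hC1 := (h1.isTab_iff hi hin).2 hC
      obtain ⟨r', h2, h3⟩ := h1.max_eq (phi_spec (hC1.empty hz) i)
      have := h3.unique hr
      have := (phi_spec (hC1.empty hz) i).le_bound (hC1.empty hz)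
      omega
  | succ m ih =>
    intro C r hC hr hm
    by_cases hh : Head C i M
    · exact ⟨C, r, 0, hC, hh, hr, by omega, rfl⟩
    · obtain ⟨j, C1, h1⟩ := exists_prev (hC.empty hz) hh
      have hC1 := (h1.isTab_iff hi hin).2 hC
      have hphi := phi_spec (hC1.empty hz) i
      obtain ⟨r', h2, h3⟩ := h1.max_eq hphi
      have := h3.unique hr
      obtain ⟨C0, r0, k, a1, a2, a3, a4, a5⟩ := ih C1 _ hC1 hphi (by omega)
      refine ⟨C0, r0, k + 1, a1, a2, a3, ?_, ?_⟩
      · have h5 := a3.iter k a4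
        rw [a5] at h5
        have := h5.unique hphi
        omega
      · rw [Function.iterate_succ_apply', a5, h1.fop_eq]

lemma head_inj {M i : ℕ} (k : ℕ) : ∀ (k' r r' : ℕ) (C C' : ℕ → Finset ℕ)
    (_ : ∀ h, M < h → C h = ∅) (_ : ∀ h, M < h → C' h = ∅) (_ : Head C i M) (_ : Head C' i M)
    (_ : MaxG C i r) (_ : MaxG C' i r') (_ : k ≤ r) (_ : k' ≤ r'),
    (fop i)^[k] C = (fop i)^[k'] C' → C = C' ∧ k = k' := by
  induction k with
  | zero =>
    intro k' r r' C C' hM hM' hh hh' hr hr' hk hk' he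
    cases k' with
    | zero => exact ⟨he, rfl⟩
    | succ k' =>
      obtain ⟨j, hj⟩ := hr'.iter_step k' (by omega)
      rw [← he] at hj
      exact (hh.no_prev hM hj).elim
  | succ k ih =>
    intro k' r r' C C' hM hM' hh hh' hr hr' hk hk' he
    obtain ⟨j, hj⟩ := hr.iter_step k (by omega)
    cases k' with
    | zero =>
      rw [he] at hj
      exact (hh'.no_prev hM' hj).elim
    | succ k' =>
      obtain ⟨j', hj'⟩ := hr'.iter_step k' (by omega)
      rw [he] at hj
      have := ih k' r r' C C' hM hM' hh hh' hr hr' (by omega) (by omega) (hj.unique_left hj')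
      exact ⟨this.1, by omega⟩

lemma MaxG.isTab_iter {n i r : ℕ} {z : ℕ → ℕ} {C : ℕ → Finset ℕ} (h : MaxG C i r) (hi : 1 ≤ i)
    (hin : i + 1 ≤ n) (hC : IsTab n z C) (k : ℕ) (hk : k ≤ r) : IsTab n z ((fop i)^[k] C) := by
  induction k with
  | zero => exact hC
  | succ k ih =>
    obtain ⟨j, hj⟩ := h.iter_step k (by omega)
    exact (hj.isTab_iff hi hin).1 (ih (by omega))

lemma sum_strings {n M i : ℕ} {z : ℕ → ℕ} (hz : ∀ j, M < j → z j = 0) (hi : 1 ≤ i)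
    (hin : i + 1 ≤ n) (g : (ℕ → Finset ℕ) → Poly) :
    ∑ C ∈ tabs n M z hz, g C = ∑ C ∈ (tabs n M z hz).filter (fun C => Head C i M),
      ∑ k ∈ Finset.range (phi i C + 1), g ((fop i)^[k] C) := by
  rw [Finset.sum_sigma']
  symm
  refine Finset.sum_bij (fun x _ => (fop i)^[x.2] x.1) ?_ ?_ ?_ ?_
  · rintro ⟨C, k⟩ hx
    simp only [Finset.mem_sigma, Finset.mem_filter, Finset.mem_range, mem_tabs] at hx ⊢
    exact (phi_spec (hx.1.1.empty hz) i).isTab_iter hi hin hx.1.1 k (by omega)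
  · rintro ⟨C, k⟩ hx ⟨C', k'⟩ hx' he
    simp only [Finset.mem_sigma, Finset.mem_filter, Finset.mem_range, mem_tabs] at hx hx' he
    have := head_inj k k' _ _ C C' (hx.1.1.empty hz) (hx'.1.1.empty hz) hx.1.2 hx'.1.2
      (phi_spec (hx.1.1.empty hz) i) (phi_spec (hx'.1.1.empty hz) i) (by omega) (by omega) he
    obtain ⟨rfl, rfl⟩ := this
    rfl
  · intro C hC
    rw [mem_tabs] at hC
    obtain ⟨C0, r0, k, a1, a2, a3, a4, a5⟩ := exists_head hz hi hin (M + 1) C _ hC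
      (phi_spec (hC.empty hz) i) (by omega)
    have := a3.unique (phi_spec (a1.empty hz) i)
    refine ⟨⟨C0, k⟩, ?_, a5⟩
    simp only [Finset.mem_sigma, Finset.mem_filter, Finset.mem_range, mem_tabs]
    exact ⟨⟨a1, a2⟩, by omega⟩
  · intros; rfl

/-- Demazure sum -/
def dsum (n M : ℕ) (z : ℕ → ℕ) (hz : ∀ j, M < j → z j = 0) (p : ℕ → ℕ) : Poly :=
  ∑ C ∈ tabs n M z hz, if InD z C p then wt M C else 0

lemma rho_dsum {n M i : ℕ} {z : ℕ → ℕ} (hz : ∀ j, M < j → z j = 0) (hi : 1 ≤ i)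
    (hin : i + 1 ≤ n) (σ : Equiv.Perm ℕ) (hσ : σ.symm i < σ.symm (i + 1)) (hσ1 : 1 ≤ σ.symm i) :
    rhoOp i (dsum n M z hz σ) = dsum n M z hz (fun t => Equiv.swap i (i + 1) (σ t)) := by
  apply RhoRel.eq
  unfold dsum
  rw [sum_strings hz hi hin, sum_strings hz hi hin]
  apply RhoRel.sum
  intro C hC
  simp only [Finset.mem_filter, mem_tabs] at hC
  have hM := hC.1.empty hz
  have hph := phi_spec hM i
  have hs := hph.rho_string hM hC.2
  by_cases hD : InD z C σ
  · have e1 : ∑ k ∈ Finset.range (phi i C + 1),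
        (if InD z ((fop i)^[k] C) (fun t => Equiv.swap i (i + 1) (σ t)) then
          wt M ((fop i)^[k] C) else 0) =
        ∑ k ∈ Finset.range (phi i C + 1), wt M ((fop i)^[k] C) := by
      apply Finset.sum_congr rfl
      intro k hk
      rw [if_pos ((hph.inD_head hM hC.2 σ hσ hσ1 k (by simp at hk; omega)).1 hD)]
    rw [e1]
    by_cases hD1 : InD z (fop i C) σ
    · have e2 : ∑ k ∈ Finset.range (phi i C + 1),
        (if InD z ((fop i)^[k] C) σ then wt M ((fop i)^[k] C) else 0) =
        ∑ k ∈ Finset.range (phi i C + 1), wt M ((fop i)^[k] C) := by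
        apply Finset.sum_congr rfl
        intro k hk
        rw [if_pos]
        cases k with
        | zero => exact hD
        | succ k => exact (hph.inD_one k (by simp at hk; omega)).2 hD1
      rw [e2]
      exact hs.idem
    · have e2 : ∑ k ∈ Finset.range (phi i C + 1),
        (if InD z ((fop i)^[k] C) σ then wt M ((fop i)^[k] C) else 0) = wt M C := by
        rw [Finset.sum_range_succ']
        simp only [Function.iterate_zero, id]
        rw [Finset.sum_eq_zero, zero_add]
        · exact if_pos hD
        · intro k hk
          rw [if_neg]
          intro h
          exact hD1 ((hph.inD_one k (by simp at hk; omega)).1 h)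
      rw [e2]
      exact hs
  · rw [Finset.sum_eq_zero, Finset.sum_eq_zero]
    · exact RhoRel.zero i
    · intro k hk
      rw [if_neg]
      intro h
      exact hD ((hph.inD_head hM hC.2 σ hσ hσ1 k (by simp at hk; omega)).2 h)
    · intro k hk
      rw [if_neg]
      intro h
      exact hD (hph.inD_zero k (by simp at hk; omega) h)

end KeyPoly

namespace KeyPoly

/-- the permutation of a word -/
def sigW : List ℕ → Equiv.Perm ℕ
  | [] => 1
  | i :: w => Equiv.swap i (i + 1) * sigW w

lemma swapVal_eq (i v : ℕ) : swapVal i v = Equiv.swap i (i + 1) v := by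
  rw [Equiv.swap_apply_def]; rfl

lemma permOfWord_cons (i : ℕ) (w : List ℕ) (t : ℕ) :
    permOfWord (i :: w) t = Equiv.swap i (i + 1) (permOfWord w t) := by
  rw [← swapVal_eq]; rfl

lemma permOfWord_eq (w : List ℕ) : permOfWord w = sigW w := by
  induction w with
  | nil => rfl
  | cons i w ih =>
    funext t
    rw [permOfWord_cons, ih]; rfl

lemma exchange (w : List ℕ) : ∀ a b : ℕ, a < b → (sigW w).symm b < (sigW w).symm a →
    ∃ w' : List ℕ, (∀ x ∈ w', x ∈ w) ∧ w'.length < w.length ∧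
      Equiv.swap a b * sigW w = sigW w' := by
  induction w with
  | nil =>
    intro a b hab h
    have e : ∀ x, (sigW []).symm x = x := fun x => rfl
    rw [e, e] at h
    omega
  | cons k u ih =>
    intro a b hab h
    have e : ∀ x, (sigW (k :: u)).symm x = (sigW u).symm (Equiv.swap k (k + 1) x) := fun x => by
      rw [Equiv.symm_apply_eq]
      simp [sigW]
    by_cases hk : a = k ∧ b = k + 1
    · obtain ⟨rfl, rfl⟩ := hk
      refine ⟨u, fun x hx => List.mem_cons_of_mem _ hx, by simp, ?_⟩
      simp [sigW, ← mul_assoc]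
    · rw [e, e] at h
      have hlt : Equiv.swap k (k + 1) a < Equiv.swap k (k + 1) b := by
        simp only [Equiv.swap_apply_def]
        split_ifs <;> omega
      obtain ⟨u', h1, h2, h3⟩ := ih _ _ hlt h
      refine ⟨k :: u', ?_, by simpa using h2, ?_⟩
      · intro x hx
        rcases List.mem_cons.mp hx with hx | hx
        · simp [hx]
        · exact List.mem_cons_of_mem _ (h1 x hx)
      · change Equiv.swap a b * (Equiv.swap k (k + 1) * sigW u) = Equiv.swap k (k + 1) * sigW u'
        rw [← h3, ← mul_assoc, ← mul_assoc, Equiv.mul_swap_eq_swap_mul (Equiv.swap k (k + 1))]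
        simp

lemma sigW_zero (w : List ℕ) (h : ∀ i ∈ w, 1 ≤ i) : sigW w 0 = 0 := by
  induction w with
  | nil => rfl
  | cons i w ih =>
    change Equiv.swap i (i + 1) (sigW w 0) = 0
    have := h i (by simp)
    rw [ih (fun j hj => h j (by simp [hj])), Equiv.swap_apply_of_ne_of_ne] <;> omega

lemma reduced_tail {n i : ℕ} {w : List ℕ} {p : ℕ → ℕ} (h : IsReducedWord n (i :: w) p) :
    IsReducedWord n w (permOfWord w) ∧ (1 ≤ i ∧ i + 1 ≤ n) ∧
      (sigW w).symm i < (sigW w).symm (i + 1) ∧ 1 ≤ (sigW w).symm i := by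
  obtain ⟨⟨h1, h2⟩, h3⟩ := h
  have hi := h1 i (by simp)
  have hw : ∀ j ∈ w, 1 ≤ j ∧ j + 1 ≤ n := fun j hj => h1 j (by simp [hj])
  refine ⟨⟨⟨hw, fun _ _ _ => rfl⟩, ?_⟩, hi, ?_, ?_⟩
  · intro v hv
    have := h3 (i :: v) ⟨?_, ?_⟩
    · simpa using this
    · intro j hj
      rcases List.mem_cons.mp hj with hj | hj
      · rw [hj]; exact hi
      · exact hv.1 j hj
    · intro t ht htn
      rw [permOfWord_cons, hv.2 t ht htn, ← permOfWord_cons]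
      exact h2 t ht htn
  · by_contra hcon
    have hne : (sigW w).symm i ≠ (sigW w).symm (i + 1) := by
      intro h; have := (sigW w).symm.injective h; omega
    obtain ⟨w', a1, a2, a3⟩ := exchange w i (i + 1) (by omega) (by omega)
    have := h3 w' ⟨fun j hj => hw j (a1 j hj), fun t ht htn => ?_⟩
    · simp at this; omega
    · rw [← h2 t ht htn, permOfWord_eq, permOfWord_eq, ← a3]; rfl
  · by_contra hcon
    have h0 : (sigW w).symm i = 0 := by omega
    rw [Equiv.symm_apply_eq, sigW_zero w (fun j hj => (hw j hj).1)] at h0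
    omega

lemma applyOps_dsum {n M : ℕ} {z : ℕ → ℕ} (hz : ∀ j, M < j → z j = 0) (P0 : Poly)
    (hP : P0 = dsum n M z hz id) (w : List ℕ) : ∀ p, IsReducedWord n w p →
    applyOps rhoOp w P0 = dsum n M z hz (permOfWord w) := by
  induction w with
  | nil => intro p _; exact hP
  | cons i w ih =>
    intro p h
    obtain ⟨h1, h2, h3, h4⟩ := reduced_tail h
    change rhoOp i (applyOps rhoOp w P0) = _
    rw [ih _ h1, permOfWord_eq, rho_dsum hz h2.1 h2.2 _ h3 h4]
    rw [permOfWord_eq]; rfl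

/-- column lengths, normalised to vanish in column 0 -/
def zc {n : ℕ} (lam : NPartition n) (j : ℕ) : ℕ := if j = 0 then 0 else zeta lam j

lemma le_zeta_iff {n : ℕ} (lam : NPartition n) (j i : ℕ) (hj : 1 ≤ j) (hi : 1 ≤ i) :
    i ≤ zeta lam j ↔ i ≤ n ∧ j ≤ lam.part i := by
  constructor
  · intro h
    by_contra hcon
    have hsub : (Finset.Icc 1 n).filter (fun i => j ≤ lam.part i) ⊆ Finset.Icc 1 (i - 1) := by
      intro x hx
      simp only [Finset.mem_filter, Finset.mem_Icc] at hx ⊢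
      refine ⟨hx.1.1, ?_⟩
      by_contra hx2
      apply hcon
      have := lam.antitone hi (show i ≤ x by omega)
      omega
    have := Finset.card_le_card hsub
    simp only [Nat.card_Icc] at this
    unfold zeta at h
    omega
  · rintro ⟨h1, h2⟩
    have hsub : Finset.Icc 1 i ⊆ (Finset.Icc 1 n).filter (fun i => j ≤ lam.part i) := by
      intro x hx
      simp only [Finset.mem_filter, Finset.mem_Icc] at hx ⊢
      have := lam.antitone hx.1 hx.2
      omega
    have := Finset.card_le_card hsub
    simp only [Nat.card_Icc] at this
    unfold zeta
    omega

lemma inShape_iff {n : ℕ} (lam : NPartition n) (j i : ℕ) :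
    InShape lam j i ↔ 1 ≤ j ∧ 1 ≤ i ∧ i ≤ zeta lam j := by
  unfold InShape
  constructor
  · rintro ⟨h1, h2, h3, h4⟩; exact ⟨h1, h2, (le_zeta_iff lam j i h1 h2).2 ⟨h3, h4⟩⟩
  · rintro ⟨h1, h2, h3⟩; exact ⟨h1, h2, (le_zeta_iff lam j i h1 h2).1 h3⟩

lemma zeta_le {n : ℕ} (lam : NPartition n) (j : ℕ) : zeta lam j ≤ n := by
  unfold zeta
  refine le_trans (Finset.card_filter_le _ _) ?_
  simp

lemma zeta_anti {n : ℕ} (lam : NPartition n) {j j' : ℕ} (h : j ≤ j') :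
    zeta lam j' ≤ zeta lam j := by
  unfold zeta
  apply Finset.card_le_card
  intro x hx
  simp only [Finset.mem_filter] at hx ⊢
  exact ⟨hx.1, by omega⟩

lemma zeta_zero {n : ℕ} (lam : NPartition n) (j : ℕ) (h : lam.part 1 < j) : zeta lam j = 0 := by
  by_contra hc
  have := ((le_zeta_iff lam j 1 (by omega) le_rfl).1 (by omega)).2
  omega

lemma zc_zero {n : ℕ} (lam : NPartition n) : ∀ j, lam.part 1 < j → zc lam j = 0 := by
  intro j hj
  unfold zc
  rw [zeta_zero lam j hj]; simp

lemma zc_le {n : ℕ} (lam : NPartition n) (j : ℕ) : zc lam j ≤ n := by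
  unfold zc; split_ifs; · omega
  exact zeta_le lam j

lemma zc_pos {n : ℕ} (lam : NPartition n) {j : ℕ} (hj : 1 ≤ j) : zc lam j = zeta lam j := by
  unfold zc; rw [if_neg (by omega)]

lemma Dec.snd_inj {C : ℕ → Finset ℕ} {l v : ℕ} {S : Finset (ℕ × ℕ)} (hS : Dec C l v S) :
    Set.InjOn Prod.snd (S : Set (ℕ × ℕ)) := by
  rintro ⟨a, x⟩ ha ⟨b, y⟩ hb h
  simp only at h
  subst h
  rcases lt_trichotomy a b with h | h | h
  · have := hS.2 _ ha _ hb h; simp at this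
  · rw [h]
  · have := hS.2 _ hb _ ha h; simp at this

lemma inD_id {n : ℕ} (lam : NPartition n) (C : ℕ → Finset ℕ) (hC : IsTab n (zc lam) C) :
    InD (zc lam) C id ↔ C = fun j => Finset.Icc 1 (zc lam j) := by
  constructor
  · intro h
    funext l
    apply Finset.eq_of_subset_of_card_le
    · rcases Nat.eq_zero_or_pos l with h0 | h0
      · have := (hC.1 l).2
        rw [h0] at this ⊢
        rw [show zc lam 0 = 0 from rfl, Finset.card_eq_zero] at this
        rw [this]; simp
      · intro x hx
        have hx1 := (hC.1 l).1 hx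
        simp only [Finset.mem_Icc] at hx1 ⊢
        refine ⟨hx1.1, ?_⟩
        by_contra hcon
        have := h l h0 (zc lam l + 1) {(l, x)} ⟨by simp; exact ⟨hx, by omega⟩, by simp⟩
        have h2 : cnt id (zc lam l) (zc lam l + 1) = 0 := by
          unfold cnt
          rw [Finset.card_eq_zero, Finset.filter_eq_empty_iff]
          intro t ht
          simp at ht ⊢; omega
        simp [h2] at this
    · rw [(hC.1 l).2]; simp
  · rintro rfl l hl v S hS
    rw [← Finset.card_image_of_injOn hS.snd_inj]
    apply Finset.card_le_card
    intro x hx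
    obtain ⟨b, hb, rfl⟩ := Finset.mem_image.mp hx
    obtain ⟨h1, h2, h3⟩ := hS.1 b hb
    simp only [Finset.mem_filter, Finset.mem_Icc] at h2 ⊢
    have := zeta_anti lam h1
    rw [zc_pos lam (by omega)] at h2 ⊢
    exact ⟨⟨h2.1, by omega⟩, h3⟩

lemma isTab_yam {n : ℕ} (lam : NPartition n) :
    IsTab n (zc lam) (fun j => Finset.Icc 1 (zc lam j)) := by
  refine ⟨fun j => ⟨?_, by simp⟩, fun j hj v => ?_⟩
  · apply Finset.Icc_subset_Icc le_rfl (zc_le lam j)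
  · apply Finset.card_le_card
    apply Finset.filter_subset_filter
    apply Finset.Icc_subset_Icc le_rfl
    rw [zc_pos lam hj, zc_pos lam (by omega)]
    exact zeta_anti lam (by omega)

lemma wt_yam {n : ℕ} (lam : NPartition n) :
    wt (lam.part 1) (fun j => Finset.Icc 1 (zc lam j)) = lamMonomial lam := by
  unfold wt lamMonomial
  have : ∀ i ∈ Finset.Icc 1 n, (MvPolynomial.X i : Poly) ^ lam.part i =
      ∏ j ∈ Finset.Icc 1 (lam.part i), (MvPolynomial.X i : Poly) := by
    intro i _; simp
  rw [Finset.prod_congr rfl this]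
  apply Finset.prod_comm'
  intro j i
  simp only [Finset.mem_range, Finset.mem_Icc]
  constructor
  · rintro ⟨h1, h2, h3⟩
    have hj : 1 ≤ j := by
      by_contra hc
      have : j = 0 := by omega
      subst this
      rw [show zc lam 0 = 0 from rfl] at h3; omega
    rw [zc_pos lam hj] at h3
    have := (le_zeta_iff lam j i hj h2).1 h3
    omega
  · rintro ⟨⟨h1, h2⟩, h3, h4⟩
    rw [zc_pos lam h1]
    have := lam.antitone le_rfl h3
    exact ⟨by omega, h3, (le_zeta_iff lam j i h1 h3).2 ⟨h4, h2⟩⟩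

lemma lamMonomial_eq {n : ℕ} (lam : NPartition n) :
    lamMonomial lam = dsum n (lam.part 1) (zc lam) (zc_zero lam) id := by
  unfold dsum
  rw [Finset.sum_eq_single_of_mem (fun j => Finset.Icc 1 (zc lam j)) (mem_tabs.2 (isTab_yam lam))]
  · rw [if_pos ((inD_id lam _ (isTab_yam lam)).2 rfl), wt_yam]
  · intro C hC hne
    rw [if_neg]
    intro h
    exact hne ((inD_id lam C (mem_tabs.1 hC)).1 h)

lemma applyOps_eq {n : ℕ} (lam : NPartition n) (p : ℕ → ℕ) (w : List ℕ)
    (hw : IsReducedWord n w p) : applyOps rhoOp w (lamMonomial lam) =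
      dsum n (lam.part 1) (zc lam) (zc_zero lam) p := by
  rw [applyOps_dsum (zc_zero lam) _ (lamMonomial_eq lam) w p hw]
  unfold dsum
  apply Finset.sum_congr rfl
  intro C _
  have : ∀ l v, cnt (permOfWord w) (zc lam l) v = cnt p (zc lam l) v := by
    intro l v
    unfold cnt
    congr 1
    apply Finset.filter_congr
    intro t ht
    simp only [Finset.mem_Icc] at ht
    rw [hw.1.2 t ht.1 (ht.2.trans (zc_le lam l))]
  have h2 : InD (zc lam) C (permOfWord w) ↔ InD (zc lam) C p := by simp only [InD, this]
  simp only [h2]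

end KeyPoly

namespace KeyPoly

lemma nextCol_some {T : ℕ → ℕ → ℕ} {c : ℕ → ℕ} {M h h' : ℕ} (H : nextCol T c M h = some h') :
    h < h' ∧ h' ≤ M ∧ 0 < c h' ∧ T h (c h) ≤ T h' (c h') ∧
      ∀ g, h < g → g < h' → ¬ (0 < c g ∧ T h (c h) ≤ T g (c g)) := by
  unfold nextCol at H
  rw [List.find?_range'_eq_some] at H
  obtain ⟨h1, h2, h3⟩ := H
  simp only [decide_eq_true_eq] at h1
  rw [List.mem_range'_1] at h2
  refine ⟨by omega, by omega, h1.1, h1.2, fun g hg hg' => ?_⟩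
  have := h3 g (by omega) hg'
  simp at this
  omega

lemma nextCol_none {T : ℕ → ℕ → ℕ} {c : ℕ → ℕ} {M h : ℕ} (H : nextCol T c M h = none) :
    ∀ g, h < g → g ≤ M → ¬ (0 < c g ∧ T h (c h) ≤ T g (c g)) := by
  unfold nextCol at H
  rw [List.find?_range'_eq_none] at H
  intro g hg hg'
  have := H g (by omega) (by omega)
  simp at this
  omega

lemma pathAux_props (T : ℕ → ℕ → ℕ) (c : ℕ → ℕ) (M fuel : ℕ) : ∀ h, M ≤ h + fuel →
    h ∈ pathColsAux T c M fuel h ∧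
    (∀ g ∈ pathColsAux T c M fuel h, (g = h ∨ (h < g ∧ g ≤ M ∧ 0 < c g)) ∧
      T h (c h) ≤ T g (c g)) ∧
    (∀ g ∈ pathColsAux T c M fuel h, ∀ g' ∈ pathColsAux T c M fuel h, g < g' →
      T g (c g) ≤ T g' (c g')) ∧
    (∀ g, h < g → g ≤ M → 0 < c g → g ∉ pathColsAux T c M fuel h →
      ∃ g0 ∈ pathColsAux T c M fuel h, g0 < g ∧ T g (c g) < T g0 (c g0)) := by
  induction fuel with
  | zero =>
    intro h hM
    simp only [pathColsAux, List.mem_singleton]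
    refine ⟨by simp, ?_, ?_, ?_⟩
    · rintro g rfl; simp
    · rintro g rfl g' rfl; simp
    · intro g h1 h2; omega
  | succ fuel ih =>
    intro h hM
    rw [pathColsAux]
    cases hn : nextCol T c M h with
    | none =>
      have h0 := nextCol_none hn
      simp only [List.mem_singleton]
      refine ⟨by simp, ?_, ?_, ?_⟩
      · rintro g rfl; simp
      · rintro g rfl g' rfl; simp
      · intro g h1 h2 h3 h4
        have := h0 g h1 h2
        exact ⟨h, rfl, h1, by by_contra hc; exact this ⟨h3, by omega⟩⟩
    | some h' =>
      obtain ⟨a1, a2, a3, a4, a5⟩ := nextCol_some hn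
      obtain ⟨i1, i2, i3, i4⟩ := ih h' (by omega)
      simp only [List.mem_cons]
      refine ⟨by simp, ?_, ?_, ?_⟩
      · rintro g (rfl | hg)
        · simp
        · obtain ⟨b1, b2⟩ := i2 g hg
          refine ⟨Or.inr ?_, by omega⟩
          rcases b1 with rfl | b1
          · exact ⟨a1, a2, a3⟩
          · exact ⟨by omega, b1.2.1, b1.2.2⟩
      · rintro g (rfl | hg) g' (rfl | hg') hlt
        · exact le_rfl
        · have := (i2 g' hg').2; omega
        · have := (i2 g hg).1; omega
        · exact i3 g hg g' hg' hlt
      · intro g h1 h2 h3 h4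
        push Not at h4
        rcases lt_trichotomy g h' with hlt | heq | hgt
        · have := a5 g h1 hlt
          exact ⟨h, Or.inl rfl, h1, by by_contra hc; exact this ⟨h3, by omega⟩⟩
        · subst heq; exact absurd i1 h4.2
        · obtain ⟨g0, c1, c2, c3⟩ := i4 g hgt h2 h3 h4.2
          exact ⟨g0, Or.inr c1, c2, c3⟩

variable {n : ℕ} {lam : NPartition n} {T : ℕ → ℕ → ℕ}

lemma IsSSYT.row (hT : IsSSYT lam T) {g h k : ℕ} (hg : 1 ≤ g) (hgh : g ≤ h) (hk : 1 ≤ k)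
    (hkz : k ≤ zeta lam h) : T g k ≤ T h k := by
  induction h, hgh using Nat.le_induction with
  | base => exact le_rfl
  | succ h hh ih =>
    have h1 := hT.2.1 h k ((inShape_iff lam _ _).2 ⟨by omega, hk, hkz⟩)
    have := ih (hkz.trans (zeta_anti lam (by omega)))
    omega

lemma IsSSYT.col (hT : IsSSYT lam T) {h y y' : ℕ} (hh : 1 ≤ h) (hy : 1 ≤ y) (hyy : y < y')
    (hz : y' ≤ zeta lam h) : T h y < T h y' := by
  induction y', hyy using Nat.le_induction with
  | base => exact hT.2.2 h y ((inShape_iff lam _ _).2 ⟨hh, by omega, hz⟩)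
  | succ y' hh' ih =>
    have h1 := hT.2.2 h y' ((inShape_iff lam _ _).2 ⟨hh, by omega, hz⟩)
    have := ih (by omega)
    omega

lemma IsSSYT.col_le (hT : IsSSYT lam T) {h y y' : ℕ} (hh : 1 ≤ h) (hy : 1 ≤ y) (hyy : y ≤ y')
    (hz : y' ≤ zeta lam h) : T h y ≤ T h y' := by
  rcases hyy.lt_or_eq with h1 | h1
  · exact (hT.col hh hy h1 hz).le
  · rw [h1]

/-- remnants -/
def cc (lam : NPartition n) (T : ℕ → ℕ → ℕ) (l r : ℕ) : ℕ → ℕ :=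
  remnantIter T (zeta lam) (lam.part 1) l r

/-- paths -/
def pth (lam : NPartition n) (T : ℕ → ℕ → ℕ) (l r : ℕ) : List ℕ :=
  pathCols T (cc lam T l r) (lam.part 1) l

lemma cc_succ (l r h : ℕ) :
    cc lam T l (r + 1) h = if h ∈ pth lam T l r then cc lam T l r h - 1 else cc lam T l r h := rfl

lemma cc_zero (l h : ℕ) : cc lam T l 0 h = zeta lam h := rfl

lemma pth_props (lam : NPartition n) (T : ℕ → ℕ → ℕ) (l r : ℕ) :
    l ∈ pth lam T l r ∧
    (∀ g ∈ pth lam T l r, (g = l ∨ (l < g ∧ g ≤ lam.part 1 ∧ 0 < cc lam T l r g)) ∧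
      T l (cc lam T l r l) ≤ T g (cc lam T l r g)) ∧
    (∀ g ∈ pth lam T l r, ∀ g' ∈ pth lam T l r, g < g' →
      T g (cc lam T l r g) ≤ T g' (cc lam T l r g')) ∧
    (∀ g, l < g → g ≤ lam.part 1 → 0 < cc lam T l r g → g ∉ pth lam T l r →
      ∃ g0 ∈ pth lam T l r, g0 < g ∧ T g (cc lam T l r g) < T g0 (cc lam T l r g0)) :=
  pathAux_props T (cc lam T l r) (lam.part 1) (lam.part 1) l (by omega)

lemma cc_le (l r h : ℕ) : cc lam T l r h ≤ zeta lam h := by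
  induction r with
  | zero => exact le_rfl
  | succ r ih => rw [cc_succ]; split_ifs <;> omega

lemma cc_self (l r : ℕ) : cc lam T l r l = zeta lam l - r := by
  induction r with
  | zero => rw [cc_zero]; rfl
  | succ r ih => rw [cc_succ, if_pos (pth_props lam T l r).1, ih]; omega

lemma le_part_of_cc {l r h : ℕ} (H : 0 < cc lam T l r h) : h ≤ lam.part 1 := by
  by_contra hc
  have := zeta_zero lam h (by omega)
  have := cc_le (lam := lam) (T := T) l r h
  omega

lemma cc_le_self (hT : IsSSYT lam T) {l : ℕ} (hl : 1 ≤ l) (r : ℕ) : ∀ h, l ≤ h →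
    cc lam T l r h ≤ cc lam T l r l := by
  induction r with
  | zero => intro h hh; exact zeta_anti lam hh
  | succ r ih =>
    intro h hh
    have hp := pth_props lam T l r
    have h0 := ih h hh
    rw [cc_succ, cc_succ l r l, if_pos hp.1]
    split_ifs with h1
    · omega
    · by_contra hc
      have hpos : 0 < cc lam T l r h := by omega
      have hne : l ≠ h := by rintro rfl; exact h1 hp.1
      obtain ⟨g, g1, g2, g3⟩ := hp.2.2.2 h (by omega) (le_part_of_cc hpos) hpos h1
      have hlg : l ≤ g := by rcases (hp.2.1 g g1).1 with h | h <;> omega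
      have hgpos : 0 < cc lam T l r g := by
        rcases (hp.2.1 g g1).1 with h | h
        · rw [h]; omega
        · exact h.2.2
      have h2 := ih g hlg
      have h3 := cc_le (lam := lam) (T := T) l r h
      have h4 := zeta_anti lam g2.le
      have h5 := hT.col_le (h := g) (by omega) hgpos (show _ ≤ cc lam T l r h by omega) (by omega)
      have h6 := hT.row (g := g) (h := h) (k := cc lam T l r h) (by omega) g2.le (by omega) h3
      omega

lemma exists_path (hT : IsSSYT lam T) {l h y : ℕ} (hl : 1 ≤ l) (hh : l ≤ h) (hy : 1 ≤ y)
    (hyz : y ≤ zeta lam h) : ∃ r, r < zeta lam l ∧ h ∈ pth lam T l r ∧ cc lam T l r h = y := by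
  have hex : ∃ r, cc lam T l r h < y := ⟨zeta lam l, by
    have := cc_le_self hT hl (zeta lam l) h hh
    rw [cc_self] at this; omega⟩
  have hs := Nat.find_spec hex
  have hm := fun b => Nat.find_min hex (m := b)
  have hle : Nat.find hex ≤ zeta lam l := Nat.find_min' hex (by
    have := cc_le_self hT hl (zeta lam l) h hh
    rw [cc_self] at this; omega)
  set r0 := Nat.find hex with hr0
  cases hr : r0 with
  | zero => rw [hr, cc_zero] at hs; omega
  | succ r =>
    have h1 := hm r (by omega)
    rw [hr, cc_succ] at hs
    split_ifs at hs with h2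
    · exact ⟨r, by omega, h2, by omega⟩
    · omega

/-- columns of `T` -/
def cols (lam : NPartition n) (T : ℕ → ℕ → ℕ) (j : ℕ) : Finset ℕ :=
  (Finset.Icc 1 (zc lam j)).image (T j)

lemma mem_cols {j x : ℕ} (hj : 1 ≤ j) :
    x ∈ cols lam T j ↔ ∃ y, 1 ≤ y ∧ y ≤ zeta lam j ∧ T j y = x := by
  simp [cols, zc_pos lam hj, and_assoc]

lemma exists_dec (hT : IsSSYT lam T) {l : ℕ} (hl : 1 ≤ l) (r : ℕ) : ∀ h y, l ≤ h → 1 ≤ y →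
    y ≤ cc lam T l r h → ∃ S, Dec (cols lam T) l (T h y) S ∧ (∀ b ∈ S, b.1 ≤ h) ∧
      S.card = r + 1 := by
  induction r with
  | zero =>
    intro h y hh hy hyc
    refine ⟨{(h, T h y)}, ⟨?_, by simp⟩, by simp, by simp⟩
    simp only [Finset.mem_singleton]
    rintro b rfl
    exact ⟨hh, (mem_cols (by omega)).2 ⟨y, hy, hyc, rfl⟩, le_rfl⟩
  | succ r ih =>
    intro h y hh hy hyc
    have hp := pth_props lam T l r
    have key : ∃ S v, Dec (cols lam T) l v S ∧ T h y < v ∧ (∀ b ∈ S, b.1 ≤ h) ∧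
        S.card = r + 1 := by
      rw [cc_succ] at hyc
      split_ifs at hyc with h1
      · obtain ⟨S, s1, s2, s3⟩ := ih h (y + 1) hh (by omega) (by omega)
        have := cc_le (lam := lam) (T := T) l r h
        exact ⟨S, _, s1, hT.col (by omega) hy (by omega) (by omega), s2, s3⟩
      · have hpos : 0 < cc lam T l r h := by omega
        have hne : l ≠ h := by rintro rfl; exact h1 hp.1
        obtain ⟨g, g1, g2, g3⟩ := hp.2.2.2 h (by omega) (le_part_of_cc hpos) hpos h1
        have hlg : l ≤ g := by rcases (hp.2.1 g g1).1 with h | h <;> omega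
        have hgpos : 0 < cc lam T l r g := by
          rcases (hp.2.1 g g1).1 with h' | h'
          · have := cc_le_self hT hl r h hh; rw [h']; omega
          · exact h'.2.2
        obtain ⟨S, s1, s2, s3⟩ := ih g _ hlg hgpos le_rfl
        have := hT.col_le (by omega) hy hyc (cc_le (lam := lam) (T := T) l r h)
        exact ⟨S, _, s1, by omega, fun b hb => (s2 b hb).trans g2.le, s3⟩
    obtain ⟨S, v, s1, s2, s3, s4⟩ := key
    have hnot : (h, T h y) ∉ S := fun hc => by
      have := (s1.1 _ hc).2.2
      simp only at this; omega
    refine ⟨insert (h, T h y) S, ⟨?_, ?_⟩, ?_, ?_⟩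
    · intro b hb
      rcases Finset.mem_insert.mp hb with rfl | hb
      · exact ⟨hh, (mem_cols (by omega)).2 ⟨y, hy, hyc.trans (cc_le _ _ _), rfl⟩, le_rfl⟩
      · have := s1.1 b hb
        exact ⟨this.1, this.2.1, by omega⟩
    · intro a ha b hb hab
      rcases Finset.mem_insert.mp ha with rfl | ha <;> rcases Finset.mem_insert.mp hb with rfl | hb
      · simp at hab
      · have := s3 b hb; simp only at hab; omega
      · have := (s1.1 a ha).2.2; simp only; omega
      · exact s1.2 a ha b hb hab
    · intro b hb
      rcases Finset.mem_insert.mp hb with rfl | hb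
      · exact le_rfl
      · exact s3 b hb
    · rw [Finset.card_insert_of_notMem hnot, s4]

lemma strict_image (e : ℕ → ℕ) (m : ℕ) (he : ∀ a b, 1 ≤ a → a < b → b ≤ m → e a < e b)
    (v k : ℕ) (hk : 1 ≤ k) (hkm : k ≤ m) :
    v ≤ e k ↔ (((Finset.Icc 1 m).image e).filter (· < v)).card < k := by
  constructor
  · intro h
    have hsub : ((Finset.Icc 1 m).image e).filter (· < v) ⊆ (Finset.Icc 1 (k - 1)).image e := by
      intro x hx
      simp only [Finset.mem_filter, Finset.mem_image, Finset.mem_Icc] at hx ⊢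
      obtain ⟨⟨a, ha, rfl⟩, hx⟩ := hx
      refine ⟨a, ⟨ha.1, ?_⟩, rfl⟩
      by_contra hc
      rcases (show k ≤ a by omega).lt_or_eq with h1 | h1
      · have := he k a hk h1 ha.2; omega
      · subst h1; omega
    have := (Finset.card_le_card hsub).trans Finset.card_image_le
    simp only [Nat.card_Icc] at this
    omega
  · intro h
    by_contra hc
    have hsub : (Finset.Icc 1 k).image e ⊆ ((Finset.Icc 1 m).image e).filter (· < v) := by
      intro x hx
      simp only [Finset.mem_filter, Finset.mem_image, Finset.mem_Icc] at hx ⊢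
      obtain ⟨a, ha, rfl⟩ := hx
      refine ⟨⟨a, ⟨ha.1, by omega⟩, rfl⟩, ?_⟩
      rcases ha.2.lt_or_eq with h1 | h1
      · have := he a k ha.1 h1 hkm; omega
      · subst h1; omega
    have h2 := Finset.card_le_card hsub
    rw [Finset.card_image_of_injOn] at h2
    · simp only [Nat.card_Icc] at h2; omega
    · intro a ha b hb hab
      simp only [Finset.coe_Icc, Set.mem_Icc] at ha hb
      rcases lt_trichotomy a b with h3 | h3 | h3
      · have := he a b ha.1 h3 (by omega); omega
      · exact h3
      · have := he b a hb.1 h3 (by omega); omega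

/-- entries of the sorted list of `s`, 1-indexed -/
def nth (s : Finset ℕ) (k : ℕ) : ℕ := (s.sort (· ≤ ·)).getD (k - 1) 0

lemma nth_strict (s : Finset ℕ) (a b : ℕ) (ha : 1 ≤ a) (hab : a < b) (hb : b ≤ s.card) :
    nth s a < nth s b := by
  have hl : (s.sort (· ≤ ·)).length = s.card := Finset.length_sort _
  unfold nth
  rw [List.getD_eq_getElem _ _ (by omega), List.getD_eq_getElem _ _ (by omega)]
  exact (Finset.sortedLT_sort s).strictMono_get
    (show (⟨a - 1, by omega⟩ : Fin _) < ⟨b - 1, by omega⟩ by simp; omega)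

lemma nth_image (s : Finset ℕ) (m : ℕ) (hm : s.card = m) : (Finset.Icc 1 m).image (nth s) = s := by
  have hl : (s.sort (· ≤ ·)).length = s.card := Finset.length_sort _
  ext x
  simp only [Finset.mem_image, Finset.mem_Icc]
  constructor
  · rintro ⟨a, ha, rfl⟩
    unfold nth
    rw [List.getD_eq_getElem _ _ (by omega)]
    exact (Finset.mem_sort (· ≤ ·)).1 (List.getElem_mem _)
  · intro hx
    obtain ⟨k, hk, rfl⟩ := List.getElem_of_mem ((Finset.mem_sort (· ≤ ·)).2 hx)
    refine ⟨k + 1, ⟨by omega, by omega⟩, ?_⟩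
    unfold nth
    rw [List.getD_eq_getElem _ _ (by omega)]
    simp

lemma key_iff {p : ℕ → ℕ} (hp : IsNPerm n p) {l k : ℕ} (hl : 1 ≤ l) (hk : 1 ≤ k)
    (hkz : k ≤ zeta lam l) (v : ℕ) :
    v ≤ keyTab lam p l k ↔ zeta lam l < k + cnt p (zeta lam l) v := by
  have hinj : Set.InjOn p (Finset.Icc 1 (zeta lam l) : Finset ℕ) := by
    apply hp.injOn.mono
    intro x hx
    simp only [Finset.coe_Icc, Set.mem_Icc] at hx ⊢
    have := zeta_le lam l
    omega
  have hcard : ((Finset.Icc 1 (zeta lam l)).image p).card = zeta lam l := by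
    rw [Finset.card_image_of_injOn hinj]; simp
  have h1 : keyTab lam p l k = nth ((Finset.Icc 1 (zeta lam l)).image p) k := by
    unfold keyTab
    rw [if_pos ((inShape_iff lam l k).2 ⟨hl, hk, hkz⟩)]; rfl
  rw [h1, strict_image _ (zeta lam l) (fun a b ha hab hb => nth_strict _ a b ha hab (by omega))
    v k hk hkz, nth_image _ _ hcard, Finset.filter_image, Finset.card_image_of_injOn
    (hinj.mono (by intro x hx; simp at hx ⊢; exact hx.1))]
  have h2 := Finset.card_filter_add_card_filter_not (s := Finset.Icc 1 (zeta lam l)) (fun t => p t < v)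
  simp only [not_lt, Nat.card_Icc] at h2
  unfold cnt
  omega

lemma remnant_eq (l k : ℕ) : remnant lam T l k = cc lam T l (zeta lam l - k) := rfl

lemma IsSSYT.le_entry (hT : IsSSYT lam T) {l k : ℕ} (hl : 1 ≤ l) (hk : 1 ≤ k)
    (hkz : k ≤ zeta lam l) : k ≤ T l k := by
  induction k, hk using Nat.le_induction with
  | base => exact (hT.1 l 1 ((inShape_iff _ _ _).2 ⟨hl, le_rfl, hkz⟩)).1
  | succ k hk ih =>
    have := hT.col hl hk (show k < k + 1 by omega) hkz
    have := ih (by omega)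
    omega

lemma aset_iff (hT : IsSSYT lam T) {p : ℕ → ℕ} {l k : ℕ} (hl : 1 ≤ l) (hk : 1 ≤ k)
    (hkz : k ≤ zeta lam l) : T l k ∈ Aset lam T p l k ↔
      ∀ h, l ≤ h → 0 < cc lam T l (zeta lam l - k) h →
        T h (cc lam T l (zeta lam l - k) h) ≤ keyTab lam p l k := by
  have hs : InShape lam l k := (inShape_iff _ _ _).2 ⟨hl, hk, hkz⟩
  have hr := hT.1 l k hs
  have hself : cc lam T l (zeta lam l - k) l = k := by rw [cc_self]; omega
  have hm : mEast T (remnant lam T l k) (lam.part 1) l ≤ keyTab lam p l k ↔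
      1 ≤ keyTab lam p l k ∧ ∀ h, l + 1 ≤ h → 0 < cc lam T l (zeta lam l - k) h →
        T h (cc lam T l (zeta lam l - k) h) ≤ keyTab lam p l k := by
    unfold mEast
    rw [max_le_iff, Finset.sup_le_iff, remnant_eq]
    refine and_congr_right fun _ => ⟨fun H h h1 h2 => H h ?_, fun H h h1 => ?_⟩
    · simp only [Finset.mem_filter, Finset.mem_Icc]
      exact ⟨⟨h1, le_part_of_cc h2⟩, h2⟩
    · simp only [Finset.mem_filter, Finset.mem_Icc] at h1
      exact H h h1.1.1 h1.2
  unfold Aset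
  constructor
  · intro H h h1 h2
    split_ifs at H with hc
    · simp at H
    · rw [not_lt, hm] at hc
      simp only [Set.mem_Icc, le_min_iff] at H
      rcases h1.lt_or_eq with h3 | h3
      · exact hc.2 h h3 h2
      · subst h3; rw [hself]; exact H.2.1
  · intro H
    have hY : T l k ≤ keyTab lam p l k := by
      have := H l le_rfl (by omega)
      rwa [hself] at this
    rw [if_neg]
    · simp only [Set.mem_Icc, le_min_iff]
      refine ⟨hT.le_entry hl hk hkz, hY, ?_, ?_⟩
      · unfold south
        split_ifs with h1
        · have := hT.2.2 l k h1; omega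
        · omega
      · unfold east
        split_ifs with h1
        · exact hT.2.1 l k h1
        · exact hr.2
    · rw [not_lt, hm]
      exact ⟨by omega, fun h h1 h2 => H h (by omega) h2⟩

lemma inD_iff_aset (hT : IsSSYT lam T) {p : ℕ → ℕ} (hp : IsNPerm n p) :
    InD (zc lam) (cols lam T) p ↔ ∀ l k, InShape lam l k → T l k ∈ Aset lam T p l k := by
  constructor
  · intro H l k hs
    obtain ⟨hl, hk, hkz⟩ := (inShape_iff _ _ _).1 hs
    rw [aset_iff hT hl hk hkz]
    intro h hh hpos
    rw [key_iff hp hl hk hkz]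
    obtain ⟨S, s1, -, s3⟩ := exists_dec hT hl (zeta lam l - k) h _ hh hpos le_rfl
    have := H l hl _ S s1
    rw [zc_pos lam hl] at this
    omega
  · intro H l hl v S hS
    rw [zc_pos lam hl]
    have hex : ∀ b : ℕ × ℕ, ∃ r, b ∈ S → r < cnt p (zeta lam l) v ∧ b.1 ∈ pth lam T l r ∧
        b.2 = T b.1 (cc lam T l r b.1) := by
      intro b
      by_cases hb : b ∈ S
      · obtain ⟨h1, h2, h3⟩ := hS.1 b hb
        obtain ⟨y, y1, y2, y3⟩ := (mem_cols (by omega)).1 h2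
        obtain ⟨r, r1, r2, r3⟩ := exists_path hT hl h1 y1 y2
        refine ⟨r, fun _ => ⟨?_, r2, by rw [r3, y3]⟩⟩
        have hk : 1 ≤ zeta lam l - r := by omega
        have h4 := (aset_iff hT hl hk (by omega)).1
          (H l (zeta lam l - r) ((inShape_iff _ _ _).2 ⟨hl, hk, by omega⟩)) b.1 h1
        rw [show zeta lam l - (zeta lam l - r) = r by omega, r3, y3] at h4
        have h5 := (key_iff hp hl hk (by omega) v).1 (h3.trans (h4 (by omega)))
        omega
      · exact ⟨0, fun h => absurd h hb⟩
    choose f hf using hex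
    have hinj : Set.InjOn f S := by
      have aux : ∀ a ∈ S, ∀ b ∈ S, f a = f b → ¬ a.1 < b.1 := by
        intro a ha b hb hab hlt
        have h1 := hf a ha
        have h2 := hf b hb
        rw [← hab] at h2
        have h3 := (pth_props lam T l (f a)).2.2.1 _ h1.2.1 _ h2.2.1 hlt
        have h4 := hS.2 a ha b hb hlt
        omega
      intro a ha b hb hab
      have h1 := aux a ha b hb hab
      have h2 := aux b hb a ha hab.symm
      have h3 : a.1 = b.1 := by omega
      apply Prod.ext h3
      rw [(hf a ha).2.2, (hf b hb).2.2, hab, h3]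
    calc S.card = (S.image f).card := (Finset.card_image_of_injOn hinj).symm
      _ ≤ (Finset.range (cnt p (zeta lam l) v)).card := by
        apply Finset.card_le_card
        intro x hx
        obtain ⟨b, hb, rfl⟩ := Finset.mem_image.mp hx
        exact Finset.mem_range.2 (hf b hb).1
      _ = _ := by simp

end KeyPoly

namespace KeyPoly

variable {n : ℕ} {lam : NPartition n} {T : ℕ → ℕ → ℕ}

lemma IsSSYT.injOn (hT : IsSSYT lam T) (j : ℕ) :
    Set.InjOn (T j) (Finset.Icc 1 (zc lam j) : Finset ℕ) := by
  intro a ha b hb hab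
  simp only [Finset.coe_Icc, Set.mem_Icc] at ha hb
  have hj : 1 ≤ j := by
    by_contra hc
    have : j = 0 := by omega
    subst this
    rw [show zc lam 0 = 0 from rfl] at ha; omega
  rw [zc_pos lam hj] at ha hb
  rcases lt_trichotomy a b with h | h | h
  · have := hT.col hj ha.1 h hb.2; omega
  · exact h
  · have := hT.col hj hb.1 h ha.2; omega

lemma IsSSYT.entry_iff (hT : IsSSYT lam T) {j k : ℕ} (hj : 1 ≤ j) (hk : 1 ≤ k)
    (hkz : k ≤ zeta lam j) (v : ℕ) : v ≤ T j k ↔ ((cols lam T j).filter (· < v)).card < k := by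
  unfold cols
  rw [zc_pos lam hj]
  exact strict_image (T j) _ (fun a b ha hab hb => hT.col hj ha hab hb) v k hk hkz

lemma IsSSYT.isTab (hT : IsSSYT lam T) : IsTab n (zc lam) (cols lam T) := by
  refine ⟨fun j => ⟨?_, ?_⟩, ?_⟩
  · intro x hx
    obtain ⟨y, hy, rfl⟩ := Finset.mem_image.mp hx
    simp only [Finset.mem_Icc] at hy
    have hj : 1 ≤ j := by
      by_contra hc
      have : j = 0 := by omega
      subst this
      rw [show zc lam 0 = 0 from rfl] at hy; omega
    rw [zc_pos lam hj] at hy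
    exact Finset.mem_Icc.2 (hT.1 j y ((inShape_iff _ _ _).2 ⟨hj, hy.1, hy.2⟩))
  · unfold cols
    rw [Finset.card_image_of_injOn (hT.injOn j)]; simp
  · intro j hj v
    by_contra hc
    set q := ((cols lam T j).filter (· < v)).card with hq
    have hle : ((cols lam T (j + 1)).filter (· < v)).card ≤ zeta lam (j + 1) := by
      refine (Finset.card_filter_le _ _).trans ?_
      unfold cols
      refine Finset.card_image_le.trans ?_
      rw [zc_pos lam (by omega)]; simp
    have hz := zeta_anti lam (show j ≤ j + 1 by omega)
    have h1 := (hT.entry_iff hj (k := q + 1) (by omega) (by omega) v).2 (by omega)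
    have h2 := hT.row hj (show j ≤ j + 1 by omega) (k := q + 1) (by omega) (by omega)
    have h3 := (hT.entry_iff (j := j + 1) (by omega) (k := q + 1) (by omega) (by omega) v).1
      (by omega)
    omega

lemma weight_eq (hT : IsSSYT lam T) : weight lam T = wt (lam.part 1) (cols lam T) := by
  unfold weight wt
  rw [Finset.prod_finset_product' (boxes lam) (Finset.range (lam.part 1 + 1))
    (fun j => Finset.Icc 1 (zc lam j)) ?_ (f := fun a b => (MvPolynomial.X (T a b) : Poly))]
  · apply Finset.prod_congr rfl
    intro j _
    unfold cols
    rw [Finset.prod_image (hT.injOn j)]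
  · rintro ⟨j, k⟩
    simp only [boxes, Finset.mem_filter, Finset.mem_product, Finset.mem_Icc, Finset.mem_range]
    constructor
    · rintro ⟨⟨⟨h1, h2⟩, h3, h4⟩, h5⟩
      rw [zc_pos lam h1]
      exact ⟨by omega, h3, (le_zeta_iff lam j k h1 h3).2 ⟨h4, h5⟩⟩
    · rintro ⟨h1, h2, h3⟩
      have hj : 1 ≤ j := by
        by_contra hc
        have : j = 0 := by omega
        subst this
        rw [show zc lam 0 = 0 from rfl] at h3; omega
      rw [zc_pos lam hj] at h3
      have := (le_zeta_iff lam j k hj h2).1 h3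
      exact ⟨⟨⟨hj, by omega⟩, h2, this.1⟩, this.2⟩

/-- the tableau of a column family -/
def tabOf (lam : NPartition n) (C : ℕ → Finset ℕ) (j k : ℕ) : ℕ :=
  if InShape lam j k then nth (C j) k else 0

lemma cols_tabOf {C : ℕ → Finset ℕ} (hC : IsTab n (zc lam) C) : cols lam (tabOf lam C) = C := by
  funext j
  have h := nth_image (C j) (zc lam j) (hC.1 j).2
  unfold cols
  rw [← h]
  rw [h]
  conv_rhs => rw [← h]
  apply Finset.image_congr
  intro k hk
  simp only [Finset.coe_Icc, Set.mem_Icc] at hk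
  have hj : 1 ≤ j := by
    by_contra hc
    have : j = 0 := by omega
    subst this
    rw [show zc lam 0 = 0 from rfl] at hk; omega
  rw [zc_pos lam hj] at hk
  unfold tabOf
  rw [if_pos ((inShape_iff _ _ _).2 ⟨hj, hk.1, hk.2⟩)]

lemma isSSYT_tabOf {C : ℕ → Finset ℕ} (hC : IsTab n (zc lam) C) : IsSSYT lam (tabOf lam C) := by
  have hcard : ∀ j, 1 ≤ j → (C j).card = zeta lam j := fun j hj => by
    rw [(hC.1 j).2, zc_pos lam hj]
  have hrange : ∀ j i, InShape lam j i → 1 ≤ tabOf lam C j i ∧ tabOf lam C j i ≤ n := by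
    intro j i hs
    obtain ⟨h1, h2, h3⟩ := (inShape_iff _ _ _).1 hs
    have hmem : tabOf lam C j i ∈ C j := by
      have h := nth_image (C j) _ (hcard j h1)
      rw [← h]
      unfold tabOf
      rw [if_pos hs]
      exact Finset.mem_image_of_mem _ (Finset.mem_Icc.2 ⟨h2, h3⟩)
    exact Finset.mem_Icc.1 ((hC.1 j).1 hmem)
  refine ⟨hrange, ?_, ?_⟩
  · intro j i hs
    obtain ⟨h1, h2, h3⟩ := (inShape_iff _ _ _).1 hs
    rcases Nat.eq_zero_or_pos j with h0 | h0
    · have : tabOf lam C j i = 0 := by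
        unfold tabOf; rw [if_neg]; rintro ⟨h, -⟩; omega
      omega
    · have hz := zeta_anti lam (show j ≤ j + 1 by omega)
      have hs' : InShape lam j i := (inShape_iff _ _ _).2 ⟨h0, h2, by omega⟩
      have e : ∀ g, 1 ≤ g → i ≤ zeta lam g → ∀ v, v ≤ nth (C g) i ↔
          ((C g).filter (· < v)).card < i := by
        intro g hg hi v
        have := strict_image (nth (C g)) (zeta lam g)
          (fun a b ha hab hb => nth_strict _ a b ha hab (by rw [hcard g hg]; exact hb)) v i h2 hi
        rwa [nth_image (C g) _ (hcard g hg)] at this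
      unfold tabOf
      rw [if_pos hs, if_pos hs', e (j + 1) h1 h3]
      refine lt_of_le_of_lt (hC.2 j h0 _) ?_
      rw [← e j h0 (by omega)]
  · intro j i hs
    obtain ⟨h1, h2, h3⟩ := (inShape_iff _ _ _).1 hs
    rcases Nat.eq_zero_or_pos i with h0 | h0
    · have : tabOf lam C j i = 0 := by
        unfold tabOf; rw [if_neg]; rintro ⟨-, h, -⟩; omega
      have := hrange j (i + 1) hs
      omega
    · have hs' : InShape lam j i := (inShape_iff _ _ _).2 ⟨h1, h0, by omega⟩
      unfold tabOf
      rw [if_pos hs, if_pos hs']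
      exact nth_strict _ i (i + 1) h0 (by omega) (by rw [hcard j h1]; exact h3)

end KeyPoly

namespace KeyPoly

/-- Corollary 10.2(i).  For any reduced word for `π`, the
Demazure polynomial `d_λ(π;x) = ρ_{i_t} ⋯ ρ_{i_1} . x^λ` is the sum of the
weight monomials of the tableaux all of whose entries lie in the `A`-sets. -/
theorem demazure_eq_sum_Aset (n : ℕ) (hn : 1 ≤ n) (lam : NPartition n)
    (p : ℕ → ℕ) (hp : IsNPerm n p) (w : List ℕ) (hw : IsReducedWord n w p) :
    applyOps rhoOp w (lamMonomial lam) =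
      ∑ᶠ T ∈ {T : ℕ → ℕ → ℕ | IsSSYT lam T ∧ ZeroOutside lam T ∧
          ∀ l k, InShape lam l k → T l k ∈ Aset lam T p l k},
        weight lam T := by
  rw [applyOps_eq lam p w hw]
  unfold dsum
  rw [← Finset.sum_filter, ← finsum_mem_coe_finset]
  symm
  apply finsum_mem_eq_of_bijOn (cols lam)
  · refine ⟨?_, ?_, ?_⟩
    · rintro T ⟨h1, h2, h3⟩
      simp only [Finset.coe_filter, Set.mem_setOf_eq, mem_tabs]
      exact ⟨h1.isTab, (inD_iff_aset h1 hp).2 h3⟩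
    · rintro T ⟨h1, h2, -⟩ T' ⟨h1', h2', -⟩ he
      funext j k
      by_cases hs : InShape lam j k
      · obtain ⟨a1, a2, a3⟩ := (inShape_iff _ _ _).1 hs
        apply le_antisymm
        · rw [h1'.entry_iff a1 a2 a3, ← he, ← h1.entry_iff a1 a2 a3]
        · rw [h1.entry_iff a1 a2 a3, he, ← h1'.entry_iff a1 a2 a3]
      · rw [h2 j k hs, h2' j k hs]
    · intro C hC
      simp only [Finset.coe_filter, Set.mem_setOf_eq, mem_tabs] at hC
      have hS := isSSYT_tabOf hC.1
      refine ⟨tabOf lam C, ⟨hS, ?_, ?_⟩, cols_tabOf hC.1⟩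
      · intro j k hs
        unfold tabOf
        rw [if_neg hs]
      · rw [← inD_iff_aset hS hp, cols_tabOf hC.1]
        exact hC.2
  · rintro T ⟨h1, -⟩
    exact weight_eq h1

end KeyPoly
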